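/- arXiv:2307.12681 — 8 statements merged into one kernel-verified Lean document; each statement's English description precedes it below -/
import Mathlib

section
/- For every finite group G there exists a finite simple graph Γ that is cubic (3-regular) such that the automorphism group of Γ is isomorphic to G. -/
/-!
Lift the Frucht graph, an asymmetric cubic graph on 12 vertices, to a cover whose fibre is `G × G`,
by placing permutations `α` and `β` of the fibre on two edges that lie in no triangle. The cover is
again cubic and has the same local structure, so counting the walks of length 7 that end outside all
triangles recovers the vertex of the Frucht graph below a given vertex; hence every automorphism of
the cover is induced by a permutation of the fibre, which must commute with `α` and `β`.

It remains to choose `α` and `β` so that their common centralizer is `G`. In the multiplication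
table `(s, g)`, let `α` multiply `g` by `s` on the right and let `β` move `s` along a cycle through
all of `G`. The fixed points of `α` form the row `s = 1`, so a permutation commuting with both
preserves every row, and then acts on `g` as a left multiplication.
-/

namespace FruchtTheorem

open SimpleGraph

section Covering

variable {V W : Type*} {Γ : SimpleGraph V} {Δ : SimpleGraph W}

/-- Covering maps of simple graphs: the neighbours of every vertex correspond bijectively to the
neighbours of its image. Surjectivity on vertices is not required. -/
def IsCovering (Γ : SimpleGraph V) (Δ : SimpleGraph W) (f : V → W) : Prop :=
  ∀ v, Set.BijOn f (Γ.neighborSet v) (Δ.neighborSet (f v))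

lemma isCovering_iso (φ : Γ ≃g Δ) : IsCovering Γ Δ φ := fun v ↦
  ⟨fun _ ↦ φ.map_adj_iff.2, φ.injective.injOn, fun w hw ↦
    ⟨φ.symm w, by simpa [← φ.map_adj_iff] using hw, φ.apply_symm_apply w⟩⟩

lemma IsCovering.comp {U : Type*} {Θ : SimpleGraph U} {f : V → W} {g : U → V}
    (hf : IsCovering Γ Δ f) (hg : IsCovering Θ Γ g) : IsCovering Θ Δ (f ∘ g) :=
  fun u ↦ (hf (g u)).comp (hg u)

variable [Δ.LocallyFinite]

/-- A cover of a locally finite graph is locally finite. -/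
noncomputable abbrev IsCovering.locallyFinite {f : V → W}
    (hf : IsCovering Γ Δ f) : Γ.LocallyFinite := fun v ↦
  ((hf v).finite_iff_finite.2 (Set.toFinite _)).fintype

lemma IsCovering.degree_eq [Γ.LocallyFinite] {f : V → W} (hf : IsCovering Γ Δ f) (v : V) :
    Γ.degree v = Δ.degree (f v) := by
  rw [← card_neighborSet_eq_degree, ← card_neighborSet_eq_degree]
  exact Fintype.card_congr (hf v).equiv

lemma IsCovering.isRegularOfDegree [Γ.LocallyFinite] {f : V → W} (hf : IsCovering Γ Δ f)
    {d : ℕ} (h : Δ.IsRegularOfDegree d) : Γ.IsRegularOfDegree d :=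
  fun v ↦ (hf.degree_eq v).trans (h (f v))

variable {M : Type*} [AddCommMonoid M]

lemma IsCovering.sum_neighborFinset [Γ.LocallyFinite] {f : V → W} (hf : IsCovering Γ Δ f)
    (c : W → M) (v : V) :
    ∑ u ∈ Γ.neighborFinset v, c (f u) = ∑ w ∈ Δ.neighborFinset (f v), c w := by
  apply Finset.sum_nbij f
  · simpa [Set.MapsTo] using (hf v).mapsTo
  · simpa using (hf v).injOn
  · simpa using (hf v).surjOn
  · simp

/-- The sum of `c` over the endpoints of all walks of length `n` starting at a given vertex. -/
def walkSum (Γ : SimpleGraph V) [Γ.LocallyFinite] (c : V → M) : ℕ → V → M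
  | 0 => c
  | n + 1 => fun v ↦ ∑ u ∈ Γ.neighborFinset v, walkSum Γ c n u

lemma walkSum_succ_eq [Γ.LocallyFinite] {c t t' : V → M} {n : ℕ} (ht : walkSum Γ c n = t)
    (h : ∀ v, ∑ u ∈ Γ.neighborFinset v, t u = t' v) : walkSum Γ c (n + 1) = t' := by
  subst ht
  exact funext h

lemma IsCovering.walkSum_comp [Γ.LocallyFinite] {f : V → W} (hf : IsCovering Γ Δ f)
    (c : W → M) (n : ℕ) :
    walkSum Γ (c ∘ f) n = walkSum Δ c n ∘ f := by
  induction n with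
  | zero => rfl
  | succ n ih =>
    ext v
    simp only [walkSum, ih, Function.comp_apply, hf.sum_neighborFinset]

lemma IsCovering.eq_of_walkSum_injective {f f' : V → W} (hf : IsCovering Γ Δ f)
    (hf' : IsCovering Γ Δ f') {c : W → M} (hc : c ∘ f = c ∘ f') {n : ℕ}
    (hinj : Function.Injective (walkSum Δ c n)) : f = f' := by
  let _ := hf.locallyFinite
  apply hinj.comp_left
  calc walkSum Δ c n ∘ f = walkSum Γ (c ∘ f) n := (hf.walkSum_comp c n).symm
    _ = walkSum Δ c n ∘ f' := by rw [hc, hf'.walkSum_comp]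

end Covering

section Triangle

variable {V W : Type*} {Γ : SimpleGraph V} {Δ : SimpleGraph W}

/-- The vertex `v` lies in a triangle of `Γ`. -/
def InTriangle (Γ : SimpleGraph V) (v : V) : Prop :=
  ∃ u w, Γ.Adj v u ∧ Γ.Adj v w ∧ Γ.Adj u w

instance [Fintype V] [DecidableRel Γ.Adj] : DecidablePred (InTriangle Γ) := fun v ↦
  inferInstanceAs <| Decidable (∃ u w, Γ.Adj v u ∧ Γ.Adj v w ∧ Γ.Adj u w)

lemma InTriangle.map (f : Γ →g Δ) {v : V} : InTriangle Γ v → InTriangle Δ (f v) := by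
  rintro ⟨u, w, hvu, hvw, huw⟩
  exact ⟨f u, f w, f.map_adj hvu, f.map_adj hvw, f.map_adj huw⟩

lemma inTriangle_iso_iff (φ : Γ ≃g Δ) {v : V} : InTriangle Δ (φ v) ↔ InTriangle Γ v :=
  ⟨fun h ↦ by simpa using h.map φ.symm.toHom, fun h ↦ h.map φ.toHom⟩

end Triangle

section VoltageLift

variable {K W : Type*} (Δ : SimpleGraph K) (p : K → K → Equiv.Perm W)
  (hp : ∀ k l, p l k = (p k l)⁻¹)

/-- The lift of `Δ` along the permutation voltages `p`: above every edge from `k` to `l`, the vertex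
`(w, k)` is joined to `(p k l w, l)`. -/
def voltageLift : SimpleGraph (W × K) where
  Adj u v := Δ.Adj u.2 v.2 ∧ v.1 = p u.2 v.2 u.1
  symm := ⟨fun u v ⟨huv, h⟩ ↦ ⟨huv.symm, by simp [hp u.2 v.2, h]⟩⟩
  loopless := ⟨fun u h ↦ Δ.irrefl h.1⟩

variable {Δ p}

lemma isCovering_voltageLift_snd : IsCovering (voltageLift Δ p hp) Δ Prod.snd := by
  refine fun v ↦ ⟨fun u h ↦ h.1, fun u hu u' hu' h ↦ ?_, fun l hl ↦ ?_⟩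
  · exact Prod.ext (by rw [hu.2, hu'.2, h]) h
  · exact ⟨(p v.2 l v.1, l), ⟨hl, rfl⟩, rfl⟩

lemma inTriangle_voltageLift_iff
    (hbal : ∀ k l m, Δ.Adj k l → Δ.Adj k m → Δ.Adj l m → p l m * p k l = p k m) (v : W × K) :
    InTriangle (voltageLift Δ p hp) v ↔ InTriangle Δ v.2 := by
  refine ⟨InTriangle.map ⟨Prod.snd, And.left⟩, ?_⟩
  rintro ⟨l, m, hl, hm, hlm⟩
  have hvoltage : p v.2 m v.1 = p l m (p v.2 l v.1) := by
    rw [← hbal _ l m hl hm hlm, Equiv.Perm.mul_apply]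
  exact ⟨(p v.2 l v.1, l), (p v.2 m v.1, m), ⟨hl, rfl⟩, ⟨hm, rfl⟩, hlm, hvoltage⟩

variable (Δ p) in
/-- The permutations of the fibre that occur as the voltage of an edge. -/
def voltages : Set (Equiv.Perm W) := {σ | ∃ k l, Δ.Adj k l ∧ p k l = σ}

/-- A permutation of the fibre commuting with all voltages acts on the lift. -/
def centralizerToAut :
    Subgroup.centralizer (voltages Δ p) →* (voltageLift Δ p hp ≃g voltageLift Δ p hp) where
  toFun ψ :=
    { toEquiv := ψ.1.prodCongr (Equiv.refl K)
      map_rel_iff' := by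
        rintro ⟨w, k⟩ ⟨w', l⟩
        refine and_congr_right fun (hkl : Δ.Adj k l) ↦ ?_
        have hcomm : p k l (ψ.1 w) = ψ.1 (p k l w) :=
          DFunLike.congr_fun (Subgroup.mem_centralizer_iff.1 ψ.2 _ ⟨k, l, hkl, rfl⟩) w
        simp [hcomm] }
  map_one' := rfl
  map_mul' _ _ := rfl

lemma centralizerToAut_injective [Nonempty K] :
    Function.Injective (centralizerToAut (Δ := Δ) hp) := by
  intro ψ χ h
  obtain ⟨k⟩ := ‹Nonempty K›
  ext w
  exact congrArg Prod.fst (DFunLike.congr_fun h (w, k))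

/-- The permutation of the fibre over `k` induced by an automorphism of the lift that maps every
fibre to itself. -/
def fibrePerm (φ : voltageLift Δ p hp ≃g voltageLift Δ p hp)
    (hφ : ∀ v, (φ v).2 = v.2) (k : K) : Equiv.Perm W where
  toFun w := (φ (w, k)).1
  invFun w := (φ.symm (w, k)).1
  left_inv w := by
    have hk : φ (w, k) = ((φ (w, k)).1, k) := Prod.ext rfl (hφ _)
    change (φ.symm ((φ (w, k)).1, k)).1 = w
    rw [← hk, φ.symm_apply_apply]
  right_inv w := by
    have hk : φ.symm (w, k) = ((φ.symm (w, k)).1, k) :=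
      Prod.ext rfl (by simpa using (hφ (φ.symm (w, k))).symm)
    change (φ ((φ.symm (w, k)).1, k)).1 = w
    rw [← hk, φ.apply_symm_apply]

section FibrePerm

variable {hp} (φ : voltageLift Δ p hp ≃g voltageLift Δ p hp) (hφ : ∀ v, (φ v).2 = v.2)

lemma apply_eq_fibrePerm (w : W) (k : K) : φ (w, k) = (fibrePerm hp φ hφ k w, k) :=
  Prod.ext rfl (hφ _)

lemma fibrePerm_mul_voltage {k l : K} (hkl : Δ.Adj k l) :
    fibrePerm hp φ hφ l * p k l = p k l * fibrePerm hp φ hφ k := by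
  ext w
  have h : (voltageLift Δ p hp).Adj (w, k) (p k l w, l) := ⟨hkl, rfl⟩
  rw [← φ.map_adj_iff, apply_eq_fibrePerm φ hφ, apply_eq_fibrePerm φ hφ] at h
  exact h.2

lemma fibrePerm_eq {Δ₀ : SimpleGraph K} (hconn : Δ₀.Preconnected) (hle : Δ₀ ≤ Δ)
    (htriv : ∀ k l, Δ₀.Adj k l → p k l = 1) (k l : K) :
    fibrePerm hp φ hφ k = fibrePerm hp φ hφ l := by
  have hreach := (reachable_iff_reflTransGen k l).1 (hconn k l)
  induction hreach with
  | refl => rfl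
  | tail _ hadj ih =>
    have h := fibrePerm_mul_voltage φ hφ (hle hadj)
    rw [htriv _ _ hadj, mul_one, one_mul] at h
    exact ih.trans h.symm

end FibrePerm

lemma centralizerToAut_surjective [Nonempty K] {Δ₀ : SimpleGraph K} (hconn : Δ₀.Preconnected)
    (hle : Δ₀ ≤ Δ) (htriv : ∀ k l, Δ₀.Adj k l → p k l = 1)
    (hfib : ∀ (φ : voltageLift Δ p hp ≃g voltageLift Δ p hp) v, (φ v).2 = v.2) :
    Function.Surjective (centralizerToAut (Δ := Δ) hp) := by
  intro φ
  obtain ⟨k₀⟩ := ‹Nonempty K›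
  have hconst (k : K) : fibrePerm hp φ (hfib φ) k = fibrePerm hp φ (hfib φ) k₀ :=
    fibrePerm_eq φ (hfib φ) hconn hle htriv k k₀
  refine ⟨⟨fibrePerm hp φ (hfib φ) k₀, Subgroup.mem_centralizer_iff.2 ?_⟩, ?_⟩
  · rintro _ ⟨k, l, hkl, rfl⟩
    simpa only [hconst] using (fibrePerm_mul_voltage φ (hfib φ) hkl).symm
  · ext1 ⟨w, k⟩
    rw [apply_eq_fibrePerm φ (hfib φ) w k]
    exact Prod.ext (DFunLike.congr_fun (hconst k).symm w) rfl

end VoltageLift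

section FruchtGraph

/-- The Frucht graph, a cubic graph without nontrivial automorphisms, as a Hamiltonian cycle with
six chords. -/
def fruchtGraph : SimpleGraph (Fin 12) :=
  cycleGraph 12 ⊔ fromEdgeSet {s(0, 7), s(1, 11), s(2, 10), s(3, 5), s(4, 9), s(6, 8)}

instance : DecidableRel fruchtGraph.Adj :=
  inferInstanceAs <| DecidableRel (cycleGraph 12 ⊔ fromEdgeSet _).Adj

lemma fruchtGraph_isRegularOfDegree : fruchtGraph.IsRegularOfDegree 3 := by
  unfold IsRegularOfDegree
  decide

/-- The indicator function of the vertices of the Frucht graph that lie in no triangle. -/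
def triangleFree (k : Fin 12) : ℕ := if InTriangle fruchtGraph k then 0 else 1

lemma walkSum_triangleFree_seven : walkSum fruchtGraph triangleFree 7 =
    ![565, 618, 534, 576, 561, 512, 502, 494, 527, 499, 635, 538] := by
  have h0 : walkSum fruchtGraph triangleFree 0 = ![0, 0, 1, 0, 0, 0, 0, 0, 0, 1, 1, 0] := by decide
  have h1 : walkSum fruchtGraph triangleFree 1 =
      ![0, 1, 1, 1, 1, 0, 0, 0, 1, 1, 2, 1] :=
    walkSum_succ_eq h0 (by decide)
  have h2 : walkSum fruchtGraph triangleFree 2 =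
      ![2, 2, 4, 2, 2, 2, 1, 1, 1, 4, 3, 3] :=
    walkSum_succ_eq h1 (by decide)
  have h3 : walkSum fruchtGraph triangleFree 3 =
      ![6, 9, 7, 8, 8, 5, 4, 4, 6, 6, 11, 7] :=
    walkSum_succ_eq h2 (by decide)
  have h4 : walkSum fruchtGraph triangleFree 4 =
      ![20, 20, 28, 20, 19, 20, 15, 16, 14, 25, 20, 26] :=
    walkSum_succ_eq h3 (by decide)
  have h5 : walkSum fruchtGraph triangleFree 5 =
      ![62, 74, 60, 67, 65, 54, 50, 49, 56, 53, 79, 60] :=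
    walkSum_succ_eq h4 (by decide)
  have h6 : walkSum fruchtGraph triangleFree 6 =
      ![183, 182, 220, 179, 174, 182, 159, 168, 152, 200, 173, 215] :=
    walkSum_succ_eq h5 (by decide)
  exact walkSum_succ_eq h6 (by decide)

lemma walkSum_triangleFree_seven_injective :
    Function.Injective (walkSum fruchtGraph triangleFree 7) := by
  rw [walkSum_triangleFree_seven]
  decide

variable {W : Type*} (α β : Equiv.Perm W)

/-- The permutation voltages on the Frucht graph that are `α` and `β` on two chords which lie in no
triangle, and trivial elsewhere. -/
def fruchtVoltage : Fin 12 → Fin 12 → Equiv.Perm W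
  | 0, 7 => α
  | 7, 0 => α⁻¹
  | 2, 10 => β
  | 10, 2 => β⁻¹
  | _, _ => 1

lemma fruchtVoltage_swap (k l : Fin 12) :
    fruchtVoltage α β l k = (fruchtVoltage α β k l)⁻¹ := by
  unfold fruchtVoltage
  split <;> split <;> simp_all

lemma fruchtVoltage_eq_one {k l : Fin 12}
    (h : s(k, l) ∉ ({s(0, 7), s(2, 10)} : Finset (Sym2 (Fin 12)))) :
    fruchtVoltage α β k l = 1 := by
  unfold fruchtVoltage
  split <;> simp_all

lemma centralizer_voltages_fruchtGraph :
    Subgroup.centralizer (voltages fruchtGraph (fruchtVoltage α β)) =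
      Subgroup.centralizer {α, β} := by
  ext ψ
  simp only [Subgroup.mem_centralizer_iff]
  constructor
  · rintro h _ (rfl | rfl)
    · exact h _ ⟨0, 7, by decide, rfl⟩
    · exact h _ ⟨2, 10, by decide, rfl⟩
  · rintro h _ ⟨k, l, -, rfl⟩
    have hα : Commute α ψ := h α (by simp)
    have hβ : Commute β ψ := h β (by simp)
    unfold fruchtVoltage
    split
    exacts [hα, hα.inv_left, hβ, hβ.inv_left, Commute.one_left ψ]

/-- The cover of the Frucht graph with voltages `α` and `β`. -/
abbrev fruchtLift : SimpleGraph (W × Fin 12) :=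
  voltageLift fruchtGraph (fruchtVoltage α β) (fruchtVoltage_swap α β)

lemma inTriangle_fruchtLift_iff (v : W × Fin 12) :
    InTriangle (fruchtLift α β) v ↔ InTriangle fruchtGraph v.2 := by
  have htriangle : ∀ k l m : Fin 12, fruchtGraph.Adj k l → fruchtGraph.Adj k m →
      fruchtGraph.Adj l m → s(k, l) ∉ ({s(0, 7), s(2, 10)} : Finset (Sym2 (Fin 12))) := by
    decide
  refine inTriangle_voltageLift_iff _ (fun k l m hkl hkm hlm ↦ ?_) v
  rw [fruchtVoltage_eq_one α β (htriangle l m k hlm hkl.symm hkm.symm),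
    fruchtVoltage_eq_one α β (htriangle k l m hkl hkm hlm),
    fruchtVoltage_eq_one α β (htriangle k m l hkm hkl hlm.symm), one_mul]

variable {α β} in
lemma snd_aut_fruchtLift (φ : fruchtLift α β ≃g fruchtLift α β) (v : W × Fin 12) :
    (φ v).2 = v.2 := by
  have hsnd : IsCovering (fruchtLift α β) fruchtGraph Prod.snd := isCovering_voltageLift_snd _
  have hcolor : triangleFree ∘ Prod.snd ∘ φ = triangleFree ∘ Prod.snd := by
    ext u
    have htriangle : InTriangle fruchtGraph (φ u).2 ↔ InTriangle fruchtGraph u.2 := by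
      simp only [← inTriangle_fruchtLift_iff α β, inTriangle_iso_iff]
    simp only [triangleFree, Function.comp_apply, htriangle]
  exact congrFun ((hsnd.comp (isCovering_iso φ)).eq_of_walkSum_injective hsnd hcolor
    walkSum_triangleFree_seven_injective) v

/-- The automorphisms of the lift are the permutations of the fibre commuting with `α` and `β`,
which realizes the common centralizer of any two permutations by a cubic graph. -/
noncomputable def centralizerEquivAut :
    Subgroup.centralizer {α, β} ≃* (fruchtLift α β ≃g fruchtLift α β) :=
  (MulEquiv.subgroupCongr (centralizer_voltages_fruchtGraph α β)).symm.trans <|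
    MulEquiv.ofBijective (centralizerToAut (fruchtVoltage_swap α β))
      ⟨centralizerToAut_injective _,
        centralizerToAut_surjective _ (cycleGraph_connected (n := 11)).preconnected le_sup_left
          (fun k l hkl ↦ fruchtVoltage_eq_one α β (by revert k l; decide)) snd_aut_fruchtLift⟩

end FruchtGraph

section MultiplicationTable

/-- Right multiplication of the entries in row `s` of `G × G` by `s`. -/
def rowMul (G : Type*) [Group G] : Equiv.Perm (G × G) :=
  (Equiv.refl G).prodShear Equiv.mulRight

/-- The permutation of the rows of `S × X` induced by a permutation of `S`. -/
def rowShift (S X : Type*) : Equiv.Perm S →* Equiv.Perm (S × X) where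
  toFun τ := τ.prodCongr (Equiv.refl X)
  map_one' := rfl
  map_mul' _ _ := rfl

variable {G : Type*} [Group G]

lemma rowMul_apply (s g : G) : rowMul G (s, g) = (s, g * s) := rfl

lemma rowMul_eq_self_iff {v : G × G} : rowMul G v = v ↔ v.1 = 1 := by
  obtain ⟨s, g⟩ := v
  simp [rowMul_apply]

/-- Left multiplication of all entries of the table. -/
def leftMul (τ : Equiv.Perm G) :
    G →* Subgroup.centralizer {rowMul G, rowShift G G τ} where
  toFun k := ⟨(Equiv.refl G).prodCongr (Equiv.mulLeft k), Subgroup.mem_centralizer_iff.2 <| by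
    rintro _ (rfl | rfl)
    · ext ⟨s, g⟩ <;> simp [rowMul, mul_assoc]
    · rfl⟩
  map_one' := by ext <;> simp
  map_mul' k l := by ext <;> simp [mul_assoc]

lemma leftMul_injective (τ : Equiv.Perm G) : Function.Injective (leftMul τ) := by
  intro k l h
  have h1 : (leftMul τ k).1 (1, 1) = (leftMul τ l).1 (1, 1) := by rw [h]
  simpa [leftMul] using h1

lemma leftMul_surjective {τ : Equiv.Perm G} (hτ : ∀ s, τ.SameCycle 1 s) :
    Function.Surjective (leftMul τ) := by
  rintro ⟨ψ, hψ⟩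
  rw [Subgroup.mem_centralizer_iff] at hψ
  have hmul : Commute (rowMul G) ψ := hψ _ (by simp)
  have hshift (i : ℤ) : Commute (rowShift G G (τ ^ i)) ψ := by
    rw [map_zpow]
    exact Commute.zpow_left (hψ _ (by simp)) i
  have hone (g : G) : (ψ (1, g)).1 = 1 := by
    rw [← rowMul_eq_self_iff, ← Equiv.Perm.mul_apply, hmul.eq, Equiv.Perm.mul_apply,
      rowMul_eq_self_iff.2 rfl]
  have hrow (s g : G) : ψ (s, g) = (s, (ψ (1, g)).2) := by
    obtain ⟨i, hi⟩ := hτ s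
    calc ψ (s, g) = ψ (rowShift G G (τ ^ i) (1, g)) := by rw [← hi]; rfl
      _ = rowShift G G (τ ^ i) (ψ (1, g)) := (DFunLike.congr_fun (hshift i) (1, g)).symm
      _ = ((τ ^ i) (ψ (1, g)).1, (ψ (1, g)).2) := rfl
      _ = (s, (ψ (1, g)).2) := by rw [hone, hi]
  have hentry (s : G) : (ψ (1, s)).2 = (ψ (1, 1)).2 * s := by
    calc (ψ (1, s)).2 = (ψ (s, s)).2 := by rw [hrow s s]
      _ = (ψ (rowMul G (s, 1))).2 := by rw [rowMul_apply, one_mul]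
      _ = (rowMul G (ψ (s, 1))).2 := congrArg Prod.snd (DFunLike.congr_fun hmul (s, 1)).symm
      _ = (ψ (1, 1)).2 * s := by rw [hrow s 1, rowMul_apply]
  refine ⟨(ψ (1, 1)).2, Subtype.ext (Equiv.ext fun ⟨s, g⟩ ↦ ?_)⟩
  calc (s, (ψ (1, 1)).2 * g) = (s, (ψ (1, g)).2) := by rw [hentry g]
    _ = ψ (s, g) := (hrow s g).symm

lemma exists_perm_centralizer_mulEquiv (G : Type*) [Group G] [Countable G] :
    ∃ α β : Equiv.Perm (G × G), Nonempty (Subgroup.centralizer {α, β} ≃* G) := by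
  obtain ⟨τ, hτ, -⟩ := (Set.countable_univ (α := G)).exists_cycleOn
  exact ⟨rowMul G, rowShift G G τ, ⟨(MulEquiv.ofBijective (leftMul τ) ⟨leftMul_injective τ,
    leftMul_surjective fun s ↦ hτ.2 (Set.mem_univ 1) (Set.mem_univ s)⟩).symm⟩⟩

end MultiplicationTable

section Transport

variable {V W : Type*}

/-- Conjugation by an isomorphism of graphs. -/
def autCongr {Γ : SimpleGraph V} {Δ : SimpleGraph W} (e : Γ ≃g Δ) : (Γ ≃g Γ) ≃* (Δ ≃g Δ) where
  toFun φ := (e.symm.trans φ).trans e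
  invFun ψ := (e.trans ψ).trans e.symm
  left_inv φ := by ext; simp
  right_inv ψ := by ext; simp
  map_mul' φ ψ := by ext; simp [RelIso.mul_apply]

open scoped Classical in
lemma exists_fin_iso_of_isRegularOfDegree [Finite V] (Γ : SimpleGraph V) [Γ.LocallyFinite] {d : ℕ}
    (h : Γ.IsRegularOfDegree d) :
    ∃ (n : ℕ) (Δ : SimpleGraph (Fin n)), Δ.IsRegularOfDegree d ∧ Nonempty (Γ ≃g Δ) := by
  let _ := Fintype.ofFinite V
  let e := Γ.overFinIso rfl
  exact ⟨_, _, (isCovering_iso e.symm).isRegularOfDegree h, ⟨e⟩⟩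

end Transport

end FruchtTheorem

open FruchtTheorem in
theorem exists_cubic_graph_aut_mulEquiv_general (G : Type*) [Group G] [Countable G] :
    ∃ (Γ : SimpleGraph ((G × G) × Fin 12)) (_ : Γ.LocallyFinite),
      Γ.IsRegularOfDegree 3 ∧ Nonempty ((Γ ≃g Γ) ≃* G) := by
  obtain ⟨α, β, ⟨e⟩⟩ := exists_perm_centralizer_mulEquiv G
  have hcover : IsCovering (fruchtLift α β) fruchtGraph Prod.snd := isCovering_voltageLift_snd _
  let _ := hcover.locallyFinite
  exact ⟨fruchtLift α β, inferInstance,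
    hcover.isRegularOfDegree fruchtGraph_isRegularOfDegree,
    ⟨(centralizerEquivAut α β).symm.trans e⟩⟩

open scoped Classical in
/-- **Frucht's theorem for cubic graphs.** For every finite group `G` there exists a
finite simple graph `Γ` (here: on some `Fin n`) that is cubic (3-regular) and whose
automorphism group (the group of graph isomorphisms `Γ ≃g Γ` under composition) is
isomorphic to `G`. -/
theorem exists_cubic_graph_aut_mulEquiv (G : Type*) [Group G] [Finite G] :
    ∃ (n : ℕ) (Γ : SimpleGraph (Fin n)),
      Γ.IsRegularOfDegree 3 ∧ Nonempty ((Γ ≃g Γ) ≃* G) := by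
  obtain ⟨Γ, _, hΓ, ⟨e⟩⟩ := exists_cubic_graph_aut_mulEquiv_general G
  obtain ⟨n, Δ, hΔ, ⟨i⟩⟩ := FruchtTheorem.exists_fin_iso_of_isRegularOfDegree Γ hΓ
  exact ⟨n, Δ, hΔ, ⟨(FruchtTheorem.autCongr i).symm.trans e⟩⟩
end

section
/- Let G be a finite group generated by two distinct non-identity elements g1 and g2. Then there exists a finite simple graph Γ on exactly 6·|G| vertices that is cubic (3-regular) and whose automorphism group is isomorphic to G. -/
/-!
Six copies of `G`, denoted `x`, `u`, `v`, `a`, `b`, `c`, are joined so that `x g`, `u g`, `v g` form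
a triangle, `u g - a g - b g - c g - v g` is a path, and the generators enter only through the
edges `x g - a (g * g₁)` and `c g - b (g * g₂)`. Left multiplication acts on this graph.

There are no further triangles, so every automorphism preserves the set of triangular vertices; the
vertices `a`, `b`, `c` then have two, no and one triangular neighbours, respectively. Hence the
automorphism maps `c g` to some `c h`, therefore `v g` to `v h`. The vertices `u` and `x` are
told apart by the pentagon `u a b c v`, since a pentagon through an edge `x - a` would force
`g₁ = 1` or `g₁ = g₂`. So the automorphism is the same map `f : G → G` on all six copies, and the
edges carrying the generators give `f (g * gᵢ) = f g * gᵢ`, i.e. `f` is a left multiplication.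
-/

theorem eq_apply_one_mul_of_map_mul_right {G : Type*} [Group G] {S : Set G}
    (hS : Subgroup.closure S = ⊤) {f : G → G} (hf : ∀ g, ∀ s ∈ S, f (g * s) = f g * s) (g : G) :
    f g = f 1 * g := by
  have hg : g ∈ Subgroup.closure S := hS ▸ Subgroup.mem_top g
  induction hg using Subgroup.closure_induction_right with
  | one => rw [mul_one]
  | mul_right g _ s hs ih => rw [hf g s hs, ih, mul_assoc]
  | mul_inv_cancel g _ s hs ih =>
    rw [← mul_assoc, eq_mul_inv_iff_mul_eq, ← hf _ s hs, inv_mul_cancel_right, ih]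

section Triangles

variable {V W : Type*} {Γ : SimpleGraph V} {Δ : SimpleGraph W}

/-- A vertex is triangular if it lies on a triangle, i.e. a 3-cycle of the graph. -/
def IsTriangular (Γ : SimpleGraph V) (p : V) : Prop :=
  ∃ q r, Γ.Adj p q ∧ Γ.Adj q r ∧ Γ.Adj r p

/-- The neighbours of `p` that lie on a triangle, which need not contain `p`. Their number is the
isomorphism invariant separating the non-triangular vertices of `cubicGraph`. -/
def triangularNeighbors (Γ : SimpleGraph V) (p : V) : Set V :=
  {q | Γ.Adj p q ∧ IsTriangular Γ q}

theorem isTriangular_map_iff (φ : Γ ≃g Δ) {p : V} : IsTriangular Δ (φ p) ↔ IsTriangular Γ p := by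
  simp only [IsTriangular, φ.surjective.exists, φ.map_adj_iff]

theorem ncard_triangularNeighbors_map (φ : Γ ≃g Δ) (p : V) :
    (triangularNeighbors Δ (φ p)).ncard = (triangularNeighbors Γ p).ncard := by
  have himage : triangularNeighbors Δ (φ p) = φ '' triangularNeighbors Γ p := by
    ext q
    obtain ⟨q, rfl⟩ := φ.surjective q
    simp [triangularNeighbors, isTriangular_map_iff, φ.map_adj_iff]
  rw [himage, Set.ncard_image_of_injective _ φ.injective]

end Triangles

section Transport

variable {V W : Type*} {Γ : SimpleGraph V} {Δ : SimpleGraph W}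

/-- Isomorphic graphs have isomorphic automorphism groups, by conjugation. -/
def graphAutCongr (e : Γ ≃g Δ) : (Γ ≃g Γ) ≃* (Δ ≃g Δ) where
  toFun φ := (e.symm.trans φ).trans e
  invFun ψ := (e.trans ψ).trans e.symm
  left_inv φ := by ext p; simp
  right_inv ψ := by ext p; simp
  map_mul' φ ψ := by ext p; simp

theorem exists_isRegularOfDegree_of_ncard_neighborSet {d : ℕ} (hd : d ≠ 0)
    (h : ∀ p, (Γ.neighborSet p).ncard = d) :
    ∃ _ : Γ.LocallyFinite, Γ.IsRegularOfDegree d := by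
  let _ : Γ.LocallyFinite := fun p =>
    (Set.finite_of_ncard_ne_zero ((h p).symm ▸ hd)).fintype
  exact ⟨_, fun p => (Set.ncard_eq_toFinset_card' _).symm.trans (h p)⟩

end Transport

section DerivedGraph

variable {ι G : Type*} [Group G] (A : ι → ι → Set G)

/-- The derived graph of a voltage graph: `A i j` is the set of voltages of the arcs from `i` to
`j`, and an arc of voltage `s` yields the edges joining `(i, g)` to `(j, g * s)` for all `g`.
An arc may be listed in one direction only; loops are discarded. -/
def derivedGraph : SimpleGraph (ι × G) :=
  .fromRel fun p q => p.2⁻¹ * q.2 ∈ A p.1 q.1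

/-- The action of the voltage group on the derived graph by left multiplication. -/
def derivedGraph.translation : G →* (derivedGraph A ≃g derivedGraph A) where
  toFun k :=
    { toEquiv := (Equiv.refl ι).prodCongr (Equiv.mulLeft k)
      map_rel_iff' := by simp [derivedGraph, Prod.ext_iff, mul_assoc] }
  map_one' := by ext p <;> simp
  map_mul' k l := by ext p <;> simp [mul_assoc]

@[simp]
theorem derivedGraph.translation_apply (k : G) (i : ι) (g : G) :
    translation A k (i, g) = (i, k * g) :=
  rfl

theorem derivedGraph.translation_injective [Nonempty ι] :
    Function.Injective (translation A) := fun k l h => by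
  obtain ⟨i⟩ := ‹Nonempty ι›
  simpa using DFunLike.congr_fun h (i, 1)

end DerivedGraph

/-- The six vertices of the voltage graph defining `cubicGraph`; they index the orbits of `G` on
the vertices of that graph. -/
inductive VertexOrbit
  | x | u | v | a | b | c
  deriving DecidableEq

instance : Fintype VertexOrbit where
  elems := {.x, .u, .v, .a, .b, .c}
  complete i := by cases i <;> simp

instance : Nonempty VertexOrbit :=
  ⟨.x⟩

section CubicGraph

variable {G : Type*} [Group G]

/-- The voltages of the arcs defining `cubicGraph`, each edge being listed in one direction. -/
def cubicVoltages (g₁ g₂ : G) : VertexOrbit → VertexOrbit → Set G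
  | .x, .u => {1}
  | .x, .v => {1}
  | .u, .v => {1}
  | .u, .a => {1}
  | .a, .b => {1}
  | .v, .c => {1}
  | .c, .b => {1, g₂}
  | .x, .a => {g₁}
  | _, _ => ∅

/-- The cubic graph on six copies of `G` whose automorphisms are the left multiplications. -/
abbrev cubicGraph (g₁ g₂ : G) : SimpleGraph (VertexOrbit × G) :=
  derivedGraph (cubicVoltages g₁ g₂)

namespace cubicGraph

variable {g₁ g₂ : G}

theorem adj_x_iff (g : G) (q : VertexOrbit × G) :
    (cubicGraph g₁ g₂).Adj (.x, g) q ↔ q = (.u, g) ∨ q = (.v, g) ∨ q = (.a, g * g₁) := by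
  obtain ⟨j, h⟩ := q
  cases j <;> simp [derivedGraph, cubicVoltages, inv_mul_eq_iff_eq_mul]

theorem adj_u_iff (g : G) (q : VertexOrbit × G) :
    (cubicGraph g₁ g₂).Adj (.u, g) q ↔ q = (.x, g) ∨ q = (.v, g) ∨ q = (.a, g) := by
  obtain ⟨j, h⟩ := q
  cases j <;> simp [derivedGraph, cubicVoltages, inv_mul_eq_iff_eq_mul, eq_comm]

theorem adj_v_iff (g : G) (q : VertexOrbit × G) :
    (cubicGraph g₁ g₂).Adj (.v, g) q ↔ q = (.x, g) ∨ q = (.u, g) ∨ q = (.c, g) := by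
  obtain ⟨j, h⟩ := q
  cases j <;> simp [derivedGraph, cubicVoltages, inv_mul_eq_iff_eq_mul, eq_comm]

theorem adj_a_iff (g : G) (q : VertexOrbit × G) :
    (cubicGraph g₁ g₂).Adj (.a, g) q ↔ q = (.u, g) ∨ q = (.b, g) ∨ q = (.x, g * g₁⁻¹) := by
  obtain ⟨j, h⟩ := q
  cases j <;> simp [derivedGraph, cubicVoltages, inv_mul_eq_iff_eq_mul, eq_mul_inv_iff_mul_eq,
    eq_inv_mul_iff_mul_eq, eq_comm]

theorem adj_b_iff (g : G) (q : VertexOrbit × G) :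
    (cubicGraph g₁ g₂).Adj (.b, g) q ↔ q = (.a, g) ∨ q = (.c, g) ∨ q = (.c, g * g₂⁻¹) := by
  obtain ⟨j, h⟩ := q
  cases j <;> simp [derivedGraph, cubicVoltages, inv_mul_eq_iff_eq_mul, eq_mul_inv_iff_mul_eq,
    eq_inv_mul_iff_mul_eq, eq_comm]

theorem adj_c_iff (g : G) (q : VertexOrbit × G) :
    (cubicGraph g₁ g₂).Adj (.c, g) q ↔ q = (.v, g) ∨ q = (.b, g) ∨ q = (.b, g * g₂) := by
  obtain ⟨j, h⟩ := q
  cases j <;> simp [derivedGraph, cubicVoltages, inv_mul_eq_iff_eq_mul, eq_inv_mul_iff_mul_eq,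
    eq_comm]

theorem ncard_neighborSet (h₂ : g₂ ≠ 1) (p : VertexOrbit × G) :
    ((cubicGraph g₁ g₂).neighborSet p).ncard = 3 := by
  have ncard_eq {q r s} (hqr : q ≠ r) (hqs : q ≠ s) (hrs : r ≠ s)
      (h : ∀ t, (cubicGraph g₁ g₂).Adj p t ↔ t = q ∨ t = r ∨ t = s) :
      ((cubicGraph g₁ g₂).neighborSet p).ncard = 3 :=
    Set.ncard_eq_three.2 ⟨q, r, s, hqr, hqs, hrs, Set.ext h⟩
  obtain ⟨_ | _ | _ | _ | _ | _, g⟩ := p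
  · exact ncard_eq (by simp) (by simp) (by simp) (adj_x_iff g)
  · exact ncard_eq (by simp) (by simp) (by simp) (adj_u_iff g)
  · exact ncard_eq (by simp) (by simp) (by simp) (adj_v_iff g)
  · exact ncard_eq (by simp) (by simp) (by simp) (adj_a_iff g)
  · exact ncard_eq (by simp) (by simp) (by simpa using h₂) (adj_b_iff g)
  · exact ncard_eq (by simp) (by simp) (by simpa using h₂) (adj_c_iff g)

theorem isTriangular_iff (h₁ : g₁ ≠ 1) (p : VertexOrbit × G) :
    IsTriangular (cubicGraph g₁ g₂) p ↔ p.1 = .x ∨ p.1 = .u ∨ p.1 = .v := by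
  obtain ⟨i, g⟩ := p
  cases i <;>
    simp [IsTriangular, adj_x_iff, adj_u_iff, adj_v_iff, adj_a_iff, adj_b_iff, adj_c_iff,
      or_and_right, exists_or, h₁]

theorem ncard_triangularNeighbors_a (h₁ : g₁ ≠ 1) (g : G) :
    (triangularNeighbors (cubicGraph g₁ g₂) (.a, g)).ncard = 2 := by
  have hset : triangularNeighbors (cubicGraph g₁ g₂) (.a, g) = {(.u, g), (.x, g * g₁⁻¹)} := by
    ext ⟨i, h⟩
    cases i <;> simp [triangularNeighbors, adj_a_iff, isTriangular_iff h₁]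
  rw [hset, Set.ncard_pair (by simp)]

theorem ncard_triangularNeighbors_b (h₁ : g₁ ≠ 1) (g : G) :
    (triangularNeighbors (cubicGraph g₁ g₂) (.b, g)).ncard = 0 := by
  have hset : triangularNeighbors (cubicGraph g₁ g₂) (.b, g) = ∅ := by
    ext ⟨i, h⟩
    cases i <;> simp [triangularNeighbors, adj_b_iff, isTriangular_iff h₁]
  rw [hset, Set.ncard_empty]

theorem ncard_triangularNeighbors_c (h₁ : g₁ ≠ 1) (g : G) :
    (triangularNeighbors (cubicGraph g₁ g₂) (.c, g)).ncard = 1 := by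
  have hset : triangularNeighbors (cubicGraph g₁ g₂) (.c, g) = {(.v, g)} := by
    ext ⟨i, h⟩
    cases i <;> simp [triangularNeighbors, adj_c_iff, isTriangular_iff h₁]
  rw [hset, Set.ncard_singleton]

theorem fst_map_eq_of_not_isTriangular (h₁ : g₁ ≠ 1) (φ : cubicGraph g₁ g₂ ≃g cubicGraph g₁ g₂)
    {p : VertexOrbit × G} (hp : ¬ IsTriangular (cubicGraph g₁ g₂) p) : (φ p).1 = p.1 := by
  have hφp : ¬ IsTriangular (cubicGraph g₁ g₂) (φ p) := mt (isTriangular_map_iff φ).1 hp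
  have hncard := ncard_triangularNeighbors_map φ p
  generalize φ p = q at hφp hncard
  obtain ⟨i, g⟩ := p
  obtain ⟨j, h⟩ := q
  cases i <;> cases j <;>
    simp_all [isTriangular_iff h₁, ncard_triangularNeighbors_a, ncard_triangularNeighbors_b,
      ncard_triangularNeighbors_c]

theorem eq_v_of_adj_c_of_isTriangular (h₁ : g₁ ≠ 1) {h : G} {q : VertexOrbit × G}
    (hcq : (cubicGraph g₁ g₂).Adj (.c, h) q) (hq : IsTriangular (cubicGraph g₁ g₂) q) :
    q = (.v, h) := by
  rcases (adj_c_iff h q).1 hcq with rfl | rfl | rfl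
  · rfl
  all_goals simp [isTriangular_iff h₁] at hq

theorem eq_x_of_adj_u_of_adj_v {h : G} {q : VertexOrbit × G}
    (huq : (cubicGraph g₁ g₂).Adj (.u, h) q) (hvq : (cubicGraph g₁ g₂).Adj (.v, h) q) :
    q = (.x, h) := by
  rcases (adj_u_iff h q).1 huq with rfl | rfl | rfl
  · rfl
  all_goals simp [adj_v_iff] at hvq

theorem eq_u_of_pentagon (hne : g₁ ≠ g₂) (h₁ : g₁ ≠ 1) {p : VertexOrbit × G} {h k l m : G}
    (hpa : (cubicGraph g₁ g₂).Adj p (.a, k)) (hab : (cubicGraph g₁ g₂).Adj (.a, k) (.b, l))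
    (hbc : (cubicGraph g₁ g₂).Adj (.b, l) (.c, h)) (hcv : (cubicGraph g₁ g₂).Adj (.c, h) (.v, m))
    (hvp : (cubicGraph g₁ g₂).Adj (.v, m) p) :
    p = (.u, h) ∧ k = h ∧ l = h := by
  obtain rfl : m = h := by simpa [adj_c_iff] using hcv
  obtain rfl : l = k := by simpa [adj_a_iff] using hab
  rcases (adj_v_iff m p).1 hvp with rfl | rfl | rfl
  · obtain rfl : l = m * g₁ := by simpa [adj_x_iff] using hpa
    obtain h | h : m = m * g₁ ∨ m = m * g₁ * g₂⁻¹ := by simpa [adj_b_iff] using hbc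
    · exact absurd (left_eq_mul.1 h) h₁
    · exact absurd (mul_left_cancel (eq_mul_inv_iff_mul_eq.1 h)).symm hne
  · obtain rfl : l = m := by simpa [adj_u_iff] using hpa
    exact ⟨rfl, rfl, rfl⟩
  · simp [adj_c_iff] at hpa

theorem exists_map_fiber_eq (hne : g₁ ≠ g₂) (h₁ : g₁ ≠ 1)
    (φ : cubicGraph g₁ g₂ ≃g cubicGraph g₁ g₂) (g : G) : ∃ h, ∀ i, φ (i, g) = (i, h) := by
  have map_outer {i : VertexOrbit} (hi : ¬ (i = .x ∨ i = .u ∨ i = .v)) :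
      ∃ h, φ (i, g) = (i, h) :=
    ⟨(φ (i, g)).2, Prod.ext (fst_map_eq_of_not_isTriangular h₁ φ ((isTriangular_iff h₁ _).not.2 hi))
      rfl⟩
  have map_adj {i j : VertexOrbit} {p q : VertexOrbit × G} (hp : φ (i, g) = p)
      (hq : φ (j, g) = q) (hadj : (cubicGraph g₁ g₂).Adj (i, g) (j, g)) :
      (cubicGraph g₁ g₂).Adj p q := by
    rwa [← hp, ← hq, φ.map_adj_iff]
  obtain ⟨k, ha⟩ := map_outer (i := .a) (by simp)
  obtain ⟨l, hb⟩ := map_outer (i := .b) (by simp)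
  obtain ⟨h, hc⟩ := map_outer (i := .c) (by simp)
  have hv : φ (.v, g) = (.v, h) :=
    eq_v_of_adj_c_of_isTriangular h₁ (map_adj hc rfl (by simp [adj_c_iff]))
      ((isTriangular_map_iff φ).2 ((isTriangular_iff h₁ _).2 (by simp)))
  obtain ⟨hu, hk, hl⟩ : φ (.u, g) = (.u, h) ∧ k = h ∧ l = h :=
    eq_u_of_pentagon hne h₁ (map_adj rfl ha (by simp [adj_u_iff]))
      (map_adj ha hb (by simp [adj_a_iff])) (map_adj hb hc (by simp [adj_b_iff]))
      (map_adj hc hv (by simp [adj_c_iff])) (map_adj hv rfl (by simp [adj_v_iff]))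
  rw [hk] at ha
  rw [hl] at hb
  have hx : φ (.x, g) = (.x, h) :=
    eq_x_of_adj_u_of_adj_v (map_adj hu rfl (by simp [adj_u_iff]))
      (map_adj hv rfl (by simp [adj_v_iff]))
  exact ⟨h, by rintro (_ | _ | _ | _ | _ | _) <;> assumption⟩

theorem translation_surjective (hne : g₁ ≠ g₂) (h₁ : g₁ ≠ 1) (h₂ : g₂ ≠ 1)
    (hgen : Subgroup.closure {g₁, g₂} = ⊤) :
    Function.Surjective (derivedGraph.translation (cubicVoltages g₁ g₂)) := by
  intro φ
  choose f hf using exists_map_fiber_eq hne h₁ φ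
  have map_adj {i j : VertexOrbit} {g h : G} (hadj : (cubicGraph g₁ g₂).Adj (i, g) (j, h)) :
      (cubicGraph g₁ g₂).Adj (i, f g) (j, f h) := by
    rwa [← hf, ← hf, φ.map_adj_iff]
  have f_injective : Function.Injective f := fun g h hgh => by
    have : φ (.x, g) = φ (.x, h) := by rw [hf, hf, hgh]
    simpa using φ.injective this
  have f_mul_g₁ (g : G) : f (g * g₁) = f g * g₁ := by
    have : (cubicGraph g₁ g₂).Adj (.x, f g) (.a, f (g * g₁)) := map_adj (by simp [adj_x_iff])
    simpa [adj_x_iff] using this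
  have f_mul_g₂ (g : G) : f (g * g₂) = f g * g₂ := by
    have : (cubicGraph g₁ g₂).Adj (.c, f g) (.b, f (g * g₂)) := map_adj (by simp [adj_c_iff])
    have : f (g * g₂) = f g ∨ f (g * g₂) = f g * g₂ := by simpa [adj_c_iff] using this
    exact this.resolve_left fun h => h₂ (mul_eq_left.1 (f_injective h))
  have f_eq := eq_apply_one_mul_of_map_mul_right hgen (f := f) fun g s hs => by
    rcases hs with rfl | rfl
    · exact f_mul_g₁ g
    · exact f_mul_g₂ g
  refine ⟨f 1, RelIso.ext fun ⟨i, g⟩ => ?_⟩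
  rw [derivedGraph.translation_apply, hf, f_eq g]

/-- The automorphisms of `cubicGraph g₁ g₂` are the left multiplications by the elements of `G`. -/
noncomputable def autEquiv (hne : g₁ ≠ g₂) (h₁ : g₁ ≠ 1) (h₂ : g₂ ≠ 1)
    (hgen : Subgroup.closure {g₁, g₂} = ⊤) :
    G ≃* (cubicGraph g₁ g₂ ≃g cubicGraph g₁ g₂) :=
  .ofBijective (derivedGraph.translation _)
    ⟨derivedGraph.translation_injective _, translation_surjective hne h₁ h₂ hgen⟩

end cubicGraph

end CubicGraph

theorem exists_cubic_graph_on_six_card_aut_mulEquiv_general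
    {V : Type*} (G : Type*) [Group G] (e : V ≃ Fin 6 × G) (g1 g2 : G)
    (hne : g1 ≠ g2) (h1 : g1 ≠ 1) (h2 : g2 ≠ 1)
    (hgen : Subgroup.closure {g1, g2} = ⊤) :
    ∃ (Γ : SimpleGraph V) (_ : Γ.LocallyFinite),
      Γ.IsRegularOfDegree 3 ∧ Nonempty ((Γ ≃g Γ) ≃* G) := by
  let vertexEquiv : V ≃ VertexOrbit × G :=
    e.trans ((Fintype.equivFinOfCardEq (n := 6) rfl).symm.prodCongr (Equiv.refl G))
  let Γ : SimpleGraph V := (cubicGraph g1 g2).comap vertexEquiv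
  let iso : Γ ≃g cubicGraph g1 g2 := SimpleGraph.Iso.comap vertexEquiv _
  have hncard (v : V) : (Γ.neighborSet v).ncard = 3 :=
    (Nat.card_congr (iso.mapNeighborSet v)).trans (cubicGraph.ncard_neighborSet h2 _)
  obtain ⟨_, hregular⟩ := exists_isRegularOfDegree_of_ncard_neighborSet three_ne_zero hncard
  exact ⟨Γ, _, hregular,
    ⟨(graphAutCongr iso).trans (cubicGraph.autEquiv hne h1 h2 hgen).symm⟩⟩

open scoped Classical in
/-- For a finite group `G` generated by two distinct non-identity elements `g1, g2`,
there is a cubic (3-regular) finite simple graph on exactly `6 * |G|` vertices whose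
automorphism group is isomorphic to `G`. -/
theorem exists_cubic_graph_on_six_card_aut_mulEquiv
    (G : Type*) [Group G] [Fintype G] (g1 g2 : G)
    (hne : g1 ≠ g2) (h1 : g1 ≠ 1) (h2 : g2 ≠ 1)
    (hgen : Subgroup.closure {g1, g2} = ⊤) :
    ∃ Γ : SimpleGraph (Fin (6 * Fintype.card G)),
      Γ.IsRegularOfDegree 3 ∧ Nonempty ((Γ ≃g Γ) ≃* G) := by
  obtain ⟨Γ, _, hregular, haut⟩ := exists_cubic_graph_on_six_card_aut_mulEquiv_general G
    (finProdFinEquiv.symm.trans ((Equiv.refl _).prodCongr (Fintype.equivFin G).symm)) g1 g2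
    hne h1 h2 hgen
  exact ⟨Γ, by convert hregular, haut⟩
end

section
/- Let G be a finite group and g1, g2 ∈ G two non-identity elements. Then the simplified Frucht graph Γ_{G,g1,g2} admits a proper 3-edge colouring; concretely, the colouring assigning colour red to the edges {(1,g),(2,g)}, {(3,g),(4,g·g1)}, {(5,g),(6,g·g2)}, colour green to the edges {(2,g),(3,g)}, {(1,g),(4,g)}, {(5,g),(6,g)}, and colour blue to the edges {(1,g),(3,g)}, {(2,g),(6,g)}, {(4,g),(5,g)} (for all g ∈ G) is a proper 3-edge colouring. -/
/-- The simplified Frucht graph `Γ_{G,g1,g2}`: vertex set `{1,…,6} × G` (labels `1,…,6`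
are encoded as `0,…,5 : Fin 6`), with edges, for every `g ∈ G`:
`{(1,g),(2,g)}, {(2,g),(3,g)}, {(1,g),(3,g)}, {(1,g),(4,g)}, {(2,g),(6,g)},
{(5,g),(6,g)}, {(4,g),(5,g)}`, together with `{(3,g),(4,g·g1)}` and `{(5,g),(6,g·g2)}`. -/
def fruchtGraph (G : Type*) [Group G] (g1 g2 : G) : SimpleGraph (Fin 6 × G) :=
  SimpleGraph.fromEdgeSet (⋃ g : G,
    {s((0, g), (1, g)), s((1, g), (2, g)), s((0, g), (2, g)), s((0, g), (3, g)),
     s((1, g), (5, g)), s((4, g), (5, g)), s((3, g), (4, g)),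
     s((2, g), (3, g * g1)), s((4, g), (5, g * g2))})

/-!
If each colour `i` pairs off the vertices by an involution `σ i`, then an edge `{v, σ i v}` is
determined by its colour together with either of its ends, so two distinct edges of the same colour
never meet. Such a colouring is well defined as soon as the neighbours `σ i v` of each vertex `v`
are pairwise distinct. In the Frucht graph edges of different colours could coincide only between
the labels `5` and `6`, which are joined by both green and red edges; `g2 ≠ 1` separates these.
-/

section InvolutionColoring

variable {V ι : Type*}

theorem sym2_mk_apply_eq_of_mem {f : V → V} (hf : Function.Involutive f) {u v : V}
    (hv : v ∈ s(u, f u)) : s(u, f u) = s(v, f v) := by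
  rcases Sym2.mem_iff.mp hv with rfl | rfl
  · rfl
  · rw [hf u, Sym2.eq_swap]

variable {σ : ι → V → V}

theorem color_eq_of_sym2_mk_apply_eq (hσ : ∀ i, Function.Involutive (σ i))
    (hinj : ∀ v, Function.Injective fun i ↦ σ i v) {i j : ι} {v w : V}
    (h : s(v, σ i v) = s(w, σ j w)) : i = j := by
  have hv : v ∈ s(w, σ j w) := h ▸ Sym2.mem_mk_left v (σ i v)
  exact hinj v (Sym2.congr_right.mp (h.trans (sym2_mk_apply_eq_of_mem (hσ j) hv)))

/-- The edge colouring giving colour `i` to the edges `{v, σ i v}`, for a family `σ` of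
involutions describing the perfect matchings of each colour. Pairs that are not of this form get an
arbitrary colour, and the definition is meaningful only when `σ i v` determines `i` for each `v`. -/
noncomputable def involutionColoring [Nonempty ι] (σ : ι → V → V) : Sym2 V → ι :=
  Function.extend (fun p : ι × V ↦ s(p.2, σ p.1 p.2)) Prod.fst fun _ ↦ Classical.arbitrary ι

variable [Nonempty ι]

theorem involutionColoring_mk_apply (hσ : ∀ i, Function.Involutive (σ i))
    (hinj : ∀ v, Function.Injective fun i ↦ σ i v) (i : ι) (v : V) :
    involutionColoring σ s(v, σ i v) = i :=
  Function.FactorsThrough.extend_apply (f := fun p : ι × V ↦ s(p.2, σ p.1 p.2))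
    (fun _ _ h ↦ color_eq_of_sym2_mk_apply_eq hσ hinj h) _ (i, v)

theorem involutionColoring_ne (hσ : ∀ i, Function.Involutive (σ i))
    (hinj : ∀ v, Function.Injective fun i ↦ σ i v) {e₁ e₂ : Sym2 V}
    (he₁ : ∃ i u, e₁ = s(u, σ i u)) (he₂ : ∃ i u, e₂ = s(u, σ i u)) (hne : e₁ ≠ e₂)
    (hv : ∃ v, v ∈ e₁ ∧ v ∈ e₂) : involutionColoring σ e₁ ≠ involutionColoring σ e₂ := by
  obtain ⟨i, u₁, rfl⟩ := he₁
  obtain ⟨j, u₂, rfl⟩ := he₂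
  obtain ⟨v, hv₁, hv₂⟩ := hv
  rw [involutionColoring_mk_apply hσ hinj, involutionColoring_mk_apply hσ hinj]
  rintro rfl
  exact hne <|
    (sym2_mk_apply_eq_of_mem (hσ i) hv₁).trans (sym2_mk_apply_eq_of_mem (hσ i) hv₂).symm

end InvolutionColoring

section Frucht

variable {G : Type*} [Group G] (g1 g2 : G)

/-- `fruchtNeighbor g1 g2 i v` is the neighbour of `v` in the simplified Frucht graph along the
edge of colour `i`, where `0`, `1`, `2` stand for red, green, blue and vertex labels are shifted
down by one as in `fruchtGraph`. -/
def fruchtNeighbor : Fin 3 → Fin 6 × G → Fin 6 × G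
  | 0, (0, g) => (1, g)
  | 0, (1, g) => (0, g)
  | 0, (2, g) => (3, g * g1)
  | 0, (3, g) => (2, g * g1⁻¹)
  | 0, (4, g) => (5, g * g2)
  | 0, (5, g) => (4, g * g2⁻¹)
  | 1, (0, g) => (3, g)
  | 1, (1, g) => (2, g)
  | 1, (2, g) => (1, g)
  | 1, (3, g) => (0, g)
  | 1, (4, g) => (5, g)
  | 1, (5, g) => (4, g)
  | 2, (0, g) => (2, g)
  | 2, (1, g) => (5, g)
  | 2, (2, g) => (0, g)
  | 2, (3, g) => (4, g)
  | 2, (4, g) => (3, g)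
  | 2, (5, g) => (1, g)

theorem fruchtNeighbor_involutive (i : Fin 3) : Function.Involutive (fruchtNeighbor g1 g2 i) := by
  rintro ⟨k, g⟩
  fin_cases i <;> fin_cases k <;> simp [fruchtNeighbor]

variable {g2} in
theorem fruchtNeighbor_injective (h2 : g2 ≠ 1) (v : Fin 6 × G) :
    Function.Injective fun i ↦ fruchtNeighbor g1 g2 i v := by
  obtain ⟨k, g⟩ := v
  intro i j hij
  fin_cases k <;> fin_cases i <;> fin_cases j <;> simp_all [fruchtNeighbor]

variable {g1 g2} in
theorem exists_eq_mk_fruchtNeighbor_of_mem_edgeSet {e : Sym2 (Fin 6 × G)}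
    (he : e ∈ (fruchtGraph G g1 g2).edgeSet) : ∃ i v, e = s(v, fruchtNeighbor g1 g2 i v) := by
  simp only [fruchtGraph, SimpleGraph.edgeSet_fromEdgeSet, Set.mem_sdiff, Set.mem_iUnion,
    Set.mem_insert_iff, Set.mem_singleton_iff] at he
  obtain ⟨⟨g, rfl | rfl | rfl | rfl | rfl | rfl | rfl | rfl | rfl⟩, -⟩ := he
  exacts [⟨0, (0, g), rfl⟩, ⟨1, (1, g), rfl⟩, ⟨2, (0, g), rfl⟩, ⟨1, (0, g), rfl⟩,
    ⟨2, (1, g), rfl⟩, ⟨1, (4, g), rfl⟩, ⟨2, (3, g), rfl⟩, ⟨0, (2, g), rfl⟩, ⟨0, (4, g), rfl⟩]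

end Frucht

theorem fruchtGraph_proper_three_edge_colouring_general
    (G : Type*) [Group G] (g1 g2 : G) (h2 : g2 ≠ 1) :
    ∃ c : Sym2 (Fin 6 × G) → Fin 3,
      (∀ g : G,
        c s((0, g), (1, g)) = 0 ∧
        c s((2, g), (3, g * g1)) = 0 ∧
        c s((4, g), (5, g * g2)) = 0 ∧
        c s((1, g), (2, g)) = 1 ∧
        c s((0, g), (3, g)) = 1 ∧
        c s((4, g), (5, g)) = 1 ∧
        c s((0, g), (2, g)) = 2 ∧
        c s((1, g), (5, g)) = 2 ∧
        c s((3, g), (4, g)) = 2) ∧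
      ∀ e₁ ∈ (fruchtGraph G g1 g2).edgeSet, ∀ e₂ ∈ (fruchtGraph G g1 g2).edgeSet,
        e₁ ≠ e₂ → (∃ v, v ∈ e₁ ∧ v ∈ e₂) → c e₁ ≠ c e₂ := by
  have hinv := fruchtNeighbor_involutive g1 g2
  have hinj := fruchtNeighbor_injective g1 h2
  have color := involutionColoring_mk_apply hinv hinj
  exact ⟨involutionColoring (fruchtNeighbor g1 g2),
    fun g ↦ ⟨color 0 (0, g), color 0 (2, g), color 0 (4, g), color 1 (1, g), color 1 (0, g),
      color 1 (4, g), color 2 (0, g), color 2 (1, g), color 2 (3, g)⟩,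
    fun _ he₁ _ he₂ ↦ involutionColoring_ne hinv hinj
      (exists_eq_mk_fruchtNeighbor_of_mem_edgeSet he₁)
      (exists_eq_mk_fruchtNeighbor_of_mem_edgeSet he₂)⟩

/-- The simplified Frucht graph admits a proper `3`-edge colouring (colours
`0 = red, 1 = green, 2 = blue`): red on the edges `{(1,g),(2,g)}`, `{(3,g),(4,g·g1)}`,
`{(5,g),(6,g·g2)}`, green on `{(2,g),(3,g)}`, `{(1,g),(4,g)}`, `{(5,g),(6,g)}`, and
blue on `{(1,g),(3,g)}`, `{(2,g),(6,g)}`, `{(4,g),(5,g)}`; any two distinct edges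
sharing a vertex receive different colours. -/
theorem fruchtGraph_proper_three_edge_colouring
    (G : Type*) [Group G] [Fintype G] (g1 g2 : G) (h1 : g1 ≠ 1) (h2 : g2 ≠ 1) :
    ∃ c : Sym2 (Fin 6 × G) → Fin 3,
      (∀ g : G,
        c s((0, g), (1, g)) = 0 ∧
        c s((2, g), (3, g * g1)) = 0 ∧
        c s((4, g), (5, g * g2)) = 0 ∧
        c s((1, g), (2, g)) = 1 ∧
        c s((0, g), (3, g)) = 1 ∧
        c s((4, g), (5, g)) = 1 ∧
        c s((0, g), (2, g)) = 2 ∧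
        c s((1, g), (5, g)) = 2 ∧
        c s((3, g), (4, g)) = 2) ∧
      ∀ e₁ ∈ (fruchtGraph G g1 g2).edgeSet, ∀ e₂ ∈ (fruchtGraph G g1 g2).edgeSet,
        e₁ ≠ e₂ → (∃ v, v ∈ e₁ ∧ v ∈ e₂) → c e₁ ≠ c e₂ :=
  fruchtGraph_proper_three_edge_colouring_general G g1 g2 h2
end

section
/- Let G be a finite group generated by two distinct non-identity elements g1 and g2. The simplified Frucht graph Γ_{G,g1,g2} admits a cycle double cover consisting of: the triangles ((1,g),(2,g),(3,g)) and the pentagons ((1,g),(2,g),(6,g),(5,g),(4,g)) for each g ∈ G; for each left coset g⟨g2⟩ one cycle of length 2·ord(g2) visiting the vertices (6,g·g2^k),(5,g·g2^k) in the order (6,g),(5,g),(6,g·g2),(5,g·g2),…; for each left coset g⟨g1⟩ one cycle of length 3·ord(g1) visiting (4,g·g1^k),(1,g·g1^k),(3,g·g1^k) in the order (4,g),(1,g),(3,g),(4,g·g1),…; and for each left coset g⟨g1·g2⟩ one cycle of length 5·ord(g1·g2) visiting the vertices in the order (6,g),(2,g),(3,g),(4,g·g1),(5,g·g1),(6,g·g1·g2),….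 This cycle double cover is invariant under every graph automorphism of the form (i,h) ↦ (i,m·h) with m ∈ G. Moreover, if ⟨g1⟩ ∩ ⟨g1·g2⟩ and ⟨g2⟩ ∩ ⟨g1·g2⟩ are both trivial, then no two distinct cycles of this cover share more than one common edge. -/
/-- The edges of a vertex list regarded as a closed cyclic sequence. -/
def cycleEdges {V : Type*} (l : List V) : List (Sym2 V) :=
  List.zipWith (fun a b => s(a, b)) l (l.rotate 1)

/-- `l` is a cycle of `Γ`: at least three pairwise distinct vertices, any two cyclically
consecutive ones being adjacent in `Γ`. -/
def IsCycleList {V : Type*} (Γ : SimpleGraph V) (l : List V) : Prop :=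
  3 ≤ l.length ∧ l.Nodup ∧ ∀ e ∈ cycleEdges l, e ∈ Γ.edgeSet

open scoped Classical in
/-- A cycle double cover: a family of cycles, counted with multiplicity, such that every
edge of `Γ` lies on exactly two members of the family. -/
def IsCycleDoubleCover {V : Type*} (Γ : SimpleGraph V) (cs : Multiset (List V)) : Prop :=
  (∀ l ∈ cs, IsCycleList Γ l) ∧
  ∀ e ∈ Γ.edgeSet, (cs.map fun l => if e ∈ cycleEdges l then 1 else 0).sum = 2

open scoped Classical in
/-- The explicit cycle double cover of the simplified Frucht graph: the triangles
`((1,g),(2,g),(3,g))` and pentagons `((1,g),(2,g),(6,g),(5,g),(4,g))` for `g ∈ G`;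
for each left coset of `⟨g2⟩` a cycle `(6,g),(5,g),(6,g·g2),(5,g·g2),…` of length
`2·ord(g2)`; for each left coset of `⟨g1⟩` a cycle `(4,g),(1,g),(3,g),(4,g·g1),…` of
length `3·ord(g1)`; and for each left coset of `⟨g1·g2⟩` a cycle
`(6,g),(2,g),(3,g),(4,g·g1),(5,g·g1),(6,g·g1·g2),…` of length `5·ord(g1·g2)`. -/
noncomputable def fruchtCDC (G : Type*) [Group G] [Fintype G] (g1 g2 : G) :
    Multiset (List (Fin 6 × G)) :=
  (Finset.univ : Finset G).val.map (fun g => [((0 : Fin 6), g), (1, g), (2, g)]) +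
  (Finset.univ : Finset G).val.map
    (fun g => [((0 : Fin 6), g), (1, g), (5, g), (4, g), (3, g)]) +
  (Finset.univ : Finset (G ⧸ Subgroup.zpowers g2)).val.map (fun q =>
    (List.range (orderOf g2)).flatMap fun k =>
      [((5 : Fin 6), q.out * g2 ^ k), (4, q.out * g2 ^ k)]) +
  (Finset.univ : Finset (G ⧸ Subgroup.zpowers g1)).val.map (fun q =>
    (List.range (orderOf g1)).flatMap fun k =>
      [((3 : Fin 6), q.out * g1 ^ k), (0, q.out * g1 ^ k), (2, q.out * g1 ^ k)]) +
  (Finset.univ : Finset (G ⧸ Subgroup.zpowers (g1 * g2))).val.map (fun q =>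
    (List.range (orderOf (g1 * g2))).flatMap fun k =>
      [((5 : Fin 6), q.out * (g1 * g2) ^ k), (1, q.out * (g1 * g2) ^ k),
       (2, q.out * (g1 * g2) ^ k), (3, q.out * (g1 * g2) ^ k * g1),
       (4, q.out * (g1 * g2) ^ k * g1)])

/-!
The simplified Frucht graph is the graph derived from a voltage graph with six vertices and nine
edges, and the cycles of the family are the lifts of five closed walks in it. Each of the nine edges
is traversed by exactly two of the walks, once by each, so each of its lifts lies on exactly two
cycles. Left multiplication commutes with the right multiplications that generate the cycles; hence
it permutes the cosets indexing them and changes each list by a rotation only.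

Let two cycles share two edges. They are of different kinds. If the two edges lie in one orbit, the
right multiplier from the first to the second lies in both of the cyclic groups by which the cycles
close up, one of them possibly conjugated by `g1`, and these meet trivially. Only a pentagon and a
cycle for `⟨g1 * g2⟩` meet in two edge orbits; sharing an edge of each would put `g1`, hence `g2`,
into `⟨g1 * g2⟩`, so that `g2 = 1`.
-/

section CyclicLists

variable {V : Type*}

/-- The edges of a vertex list regarded as an open path; compare `cycleEdges`. -/
def pathEdges (l : List V) : List (Sym2 V) :=
  List.zipWith (fun a b => s(a, b)) l l.tail

@[simp]
theorem pathEdges_singleton (a : V) : pathEdges [a] = [] := rfl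

@[simp]
theorem pathEdges_cons_cons (a b : V) (l : List V) :
    pathEdges (a :: b :: l) = s(a, b) :: pathEdges (b :: l) := rfl

theorem pathEdges_append (l l' : List V) :
    pathEdges (l ++ l') = pathEdges (l ++ l'.take 1) ++ pathEdges l' := by
  induction l with
  | nil => rcases l' with _ | ⟨b, l'⟩ <;> simp [pathEdges]
  | cons a l ih =>
    cases l with
    | nil => rcases l' with _ | ⟨b, l'⟩ <;> simp [pathEdges]
    | cons b l => simpa using ih

theorem cycleEdges_eq_pathEdges (l : List V) : cycleEdges l = pathEdges (l ++ l.take 1) := by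
  cases l with
  | nil => rfl
  | cons a l =>
    have := List.zipWith_append (f := fun a b => s(a, b)) (l₁ := a :: l) (l₁' := [a])
      (l₂ := l ++ [a]) (l₂' := []) (by simp)
    simpa [cycleEdges, pathEdges] using this.symm

theorem pathEdges_flatMap_range {F : ℕ → List V} (hF : ∀ k, F k ≠ []) (n : ℕ) :
    pathEdges ((List.range n).flatMap F ++ (F n).take 1) =
      (List.range n).flatMap fun k => pathEdges (F k ++ (F (k + 1)).take 1) := by
  induction n with
  | zero => cases h : F 0 <;> simp [pathEdges]
  | succ n ih =>
    have htake : (F n ++ (F (n + 1)).take 1).take 1 = (F n).take 1 :=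
      List.take_append_of_le_length (List.length_pos_iff.mpr (hF n))
    simp only [List.range_succ, List.flatMap_append, List.flatMap_singleton, List.append_assoc]
    rw [pathEdges_append, htake, ih]

theorem cycleEdges_flatMap_range {F : ℕ → List V} (hF : ∀ k, F k ≠ []) {n : ℕ}
    (hn : F n = F 0) :
    cycleEdges ((List.range n).flatMap F) =
      (List.range n).flatMap fun k => pathEdges (F k ++ (F (k + 1)).take 1) := by
  rcases n with _ | n
  · rfl
  have htake : ((List.range (n + 1)).flatMap F).take 1 = (F (n + 1)).take 1 := by
    rw [List.range_succ_eq_map, List.flatMap_cons, hn]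
    exact List.take_append_of_le_length (List.length_pos_iff.mpr (hF 0))
  rw [cycleEdges_eq_pathEdges, htake, pathEdges_flatMap_range hF]

theorem isRotated_flatMap_range_succ {F : ℕ → List V} {n : ℕ} (hn : F n = F 0) :
    ((List.range n).flatMap fun k => F (k + 1)) ~r (List.range n).flatMap F := by
  rcases n with _ | n
  · rfl
  rw [List.range_succ, List.flatMap_append, List.flatMap_singleton, hn, ← List.range_succ,
    List.range_succ_eq_map, List.flatMap_cons, List.flatMap_map]
  exact List.isRotated_append

end CyclicLists

section OrbitCycles

variable {G V : Type*} [Group G] {c x y : G} {B : G → List V}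

/-- The concatenation of the blocks `B x, B (x * c), B (x * c ^ 2), …` over one period of right
multiplication by `c`. -/
noncomputable def orbitCycle (c : G) (B : G → List V) (x : G) : List V :=
  (List.range (orderOf c)).flatMap fun k => B (x * c ^ k)

theorem orbitCycle_one (B : G → List V) (x : G) : orbitCycle 1 B x = B x := by
  simp [orbitCycle]

theorem map_orbitCycle {W : Type*} (f : V → W) (c : G) (B : G → List V) (x : G) :
    (orbitCycle c B x).map f = orbitCycle c (fun y => (B y).map f) x :=
  List.map_flatMap

theorem orbitCycle_comp_mul_left (c : G) (B : G → List V) (m x : G) :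
    orbitCycle c (fun y => B (m * y)) x = orbitCycle c B (m * x) := by
  simp only [orbitCycle, mul_assoc]

theorem length_orbitCycle (c : G) {n : ℕ} (hB : ∀ y, (B y).length = n) (x : G) :
    (orbitCycle c B x).length = orderOf c * n := by
  simp [orbitCycle, List.length_flatMap, hB]

theorem nodup_orbitCycle (c : G) (hnodup : ∀ y, (B y).Nodup)
    (hdisj : Pairwise fun y z => (B y).Disjoint (B z)) (x : G) :
    (orbitCycle c B x).Nodup := by
  refine List.nodup_flatMap.mpr ⟨fun k _ => hnodup _, ?_⟩
  refine List.nodup_range.imp_of_mem fun {i j} hi hj hij => hdisj fun h => hij ?_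
  exact pow_injOn_Iio_orderOf (List.mem_range.mp hi) (List.mem_range.mp hj) (mul_left_cancel h)

theorem mem_orbitCycle {v : V} (hc : IsOfFinOrder c) :
    v ∈ orbitCycle c B x ↔ ∃ y : G, (y : G ⧸ Subgroup.zpowers c) = x ∧ v ∈ B y := by
  classical
  have hcoset (y : G) : (y : G ⧸ Subgroup.zpowers c) = x ↔ ∃ k < orderOf c, x * c ^ k = y := by
    rw [eq_comm, QuotientGroup.eq, hc.mem_zpowers_iff_mem_range_orderOf]
    simp only [Finset.mem_image, Finset.mem_range, eq_inv_mul_iff_mul_eq]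
  simp only [orbitCycle, List.mem_flatMap, List.mem_range, hcoset]
  constructor
  · rintro ⟨k, hk, hv⟩
    exact ⟨x * c ^ k, ⟨k, hk, rfl⟩, hv⟩
  · rintro ⟨_, ⟨k, hk, rfl⟩, hv⟩
    exact ⟨k, hk, hv⟩

theorem cycleEdges_orbitCycle (c : G) (hB : ∀ y, B y ≠ []) (x : G) :
    cycleEdges (orbitCycle c B x) =
      orbitCycle c (fun y => pathEdges (B y ++ (B (y * c)).take 1)) x := by
  simp only [orbitCycle, mul_assoc, ← pow_succ]
  exact cycleEdges_flatMap_range (fun k => hB _) (by simp [pow_orderOf_eq_one])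

theorem isRotated_orbitCycle_mul (c : G) (B : G → List V) (x : G) :
    orbitCycle c B (x * c) ~r orbitCycle c B x := by
  simp only [orbitCycle, mul_assoc, ← pow_succ']
  exact isRotated_flatMap_range_succ (F := fun k => B (x * c ^ k)) (by simp [pow_orderOf_eq_one])

theorem isRotated_orbitCycle (B : G → List V) (h : (x : G ⧸ Subgroup.zpowers c) = y) :
    orbitCycle c B x ~r orbitCycle c B y := by
  obtain ⟨n, hn⟩ := Subgroup.mem_zpowers_iff.mp (QuotientGroup.eq.mp h)
  obtain rfl : x * c ^ n = y := by rw [hn, mul_inv_cancel_left]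
  clear hn h
  induction n with
  | zero => simp [List.IsRotated.refl]
  | succ n ih =>
    rw [zpow_add_one, ← mul_assoc]
    exact ih.trans (isRotated_orbitCycle_mul c B _).symm
  | pred n ih =>
    refine ih.trans ?_
    simpa [mul_assoc, ← zpow_add_one] using isRotated_orbitCycle_mul c B (x * c ^ (-(n : ℤ) - 1))

/-- The family of orbit cycles with blocks `B`, one for each left coset of `⟨c⟩`. -/
noncomputable def cosetCycles (c : G) [Fintype (G ⧸ Subgroup.zpowers c)] (B : G → List V) :
    Multiset (List V) :=
  (Finset.univ : Finset (G ⧸ Subgroup.zpowers c)).val.map fun q => orbitCycle c B q.out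

theorem mem_cosetCycles [Fintype (G ⧸ Subgroup.zpowers c)] {l : List V} :
    l ∈ cosetCycles c B ↔ ∃ q : G ⧸ Subgroup.zpowers c, orbitCycle c B q.out = l := by
  simp [cosetCycles]

theorem cosetCycles_one [Fintype G] {_ : Fintype (G ⧸ Subgroup.zpowers (1 : G))} (B : G → List V) :
    cosetCycles 1 B = (Finset.univ : Finset G).val.map B := by
  have hout : Function.Bijective (Quotient.out : G ⧸ Subgroup.zpowers (1 : G) → G) := by
    refine ⟨Quotient.out_injective, fun x => ⟨(x : G ⧸ Subgroup.zpowers (1 : G)), ?_⟩⟩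
    have h := QuotientGroup.eq.mp (QuotientGroup.out_eq' (x : G ⧸ Subgroup.zpowers (1 : G)))
    exact inv_mul_eq_one.mp (by simpa using h)
  simp only [cosetCycles, orbitCycle_one]
  rw [← Multiset.map_univ_val_equiv (Equiv.ofBijective _ hout), Multiset.map_map]
  rfl

theorem rel_isRotated_map_cosetCycles [Fintype (G ⧸ Subgroup.zpowers c)] {f : V → V} {m : G}
    (hB : ∀ y, (B y).map f = B (m * y)) :
    Multiset.Rel List.IsRotated ((cosetCycles c B).map (List.map f)) (cosetCycles c B) := by
  have hperm : (Finset.univ : Finset (G ⧸ Subgroup.zpowers c)).val.map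
      (MulAction.toPerm m : Equiv.Perm (G ⧸ Subgroup.zpowers c)) = Finset.univ.val :=
    Multiset.map_univ_val_equiv _
  have hcoset (q : G ⧸ Subgroup.zpowers c) :
      ((m * q.out : G) : G ⧸ Subgroup.zpowers c) = ((m • q).out : G) := by
    rw [QuotientGroup.out_eq', ← smul_eq_mul, MulAction.Quotient.coe_smul_out]
  conv_rhs => rw [cosetCycles, ← hperm]
  rw [cosetCycles, Multiset.map_map, Multiset.map_map, Multiset.rel_map]
  refine Multiset.rel_refl_of_refl_on fun q _ => ?_
  simp only [Function.comp_apply, map_orbitCycle, hB, orbitCycle_comp_mul_left]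
  exact isRotated_orbitCycle B (hcoset q)

end OrbitCycles

namespace Frucht

/-- The end labels of the nine orbits of edges under left multiplication by `G`, in the order of
`fruchtGraph` and with the smaller label first. -/
def edgeEnds : Fin 9 → Fin 6 × Fin 6 :=
  ![(0, 1), (1, 2), (0, 2), (0, 3), (1, 5), (4, 5), (3, 4), (2, 3), (4, 5)]

/-- The voltage of an edge orbit: the right multiplier from the group coordinate of the first end
to that of the second, so that `edgeEnds` and `voltage` present `fruchtGraph` as the graph derived
from a voltage graph on `Fin 6`. -/
def voltage {G : Type*} [Group G] (g1 g2 : G) : Fin 9 → G :=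
  ![1, 1, 1, 1, 1, 1, 1, g1, g2]

/-- The edge of the `i`-th orbit whose first end has group coordinate `x`. -/
def edge {G : Type*} [Group G] (g1 g2 : G) (i : Fin 9) (x : G) : Sym2 (Fin 6 × G) :=
  s(((edgeEnds i).1, x), ((edgeEnds i).2, x * voltage g1 g2 i))

/-- The five families making up `fruchtCDC`, whose cycles are called faces; `coset₁`, `coset₂` and
`coset₁₂` are the cycles indexed by the left cosets of `⟨g1⟩`, `⟨g2⟩` and `⟨g1 * g2⟩`. -/
inductive FaceKind
  | triangle
  | pentagon
  | coset₁
  | coset₂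
  | coset₁₂
  deriving DecidableEq

namespace FaceKind

instance : Fintype FaceKind where
  elems := {triangle, pentagon, coset₁, coset₂, coset₁₂}
  complete k := by cases k <;> decide

variable {G : Type*} [Group G]

/-- The right multiplier from one block of a face to the next, trivial for the faces that consist
of a single block. -/
def period (g1 g2 : G) : FaceKind → G
  | triangle => 1
  | pentagon => 1
  | coset₁ => g1
  | coset₂ => g2
  | coset₁₂ => g1 * g2

/-- The stretch of vertices that a face of the given kind repeats once per power of its period. -/
def block (g1 : G) : FaceKind → G → List (Fin 6 × G)
  | triangle, y => [(0, y), (1, y), (2, y)]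
  | pentagon, y => [(0, y), (1, y), (5, y), (4, y), (3, y)]
  | coset₁, y => [(3, y), (0, y), (2, y)]
  | coset₂, y => [(5, y), (4, y)]
  | coset₁₂, y => [(5, y), (1, y), (2, y), (3, y * g1), (4, y * g1)]

/-- The edge orbits met by a block, including the step to the next block, in order. -/
def edges : FaceKind → List (Fin 9)
  | triangle => [0, 1, 2]
  | pentagon => [0, 4, 5, 6, 3]
  | coset₁ => [3, 2, 7]
  | coset₂ => [5, 8]
  | coset₁₂ => [4, 1, 7, 6, 8]

/-- The group coordinate of the first end of the `i`-th edge of a block, relative to the base point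
of the block. -/
def offset (g1 : G) : FaceKind → Fin 9 → G
  | coset₁₂, 6 => g1
  | coset₁₂, 8 => g1
  | _, _ => 1

theorem card_filter_mem_edges (i : Fin 9) :
    (Finset.univ.filter fun k => i ∈ edges k).card = 2 := by
  decide +revert

set_option synthInstance.maxSize 1000 in
theorem disk_or_coset_of_mem_edges {k k' : FaceKind} {i : Fin 9} (hk : k ≠ k')
    (hi : i ∈ edges k) (hi' : i ∈ edges k') :
    (k = triangle ∨ k = pentagon) ∨ (k' = triangle ∨ k' = pentagon) ∨
      (k = coset₁ ∧ k' = coset₁₂ ∨ k = coset₁₂ ∧ k' = coset₁) ∧ i = 7 ∨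
        (k = coset₂ ∧ k' = coset₁₂ ∨ k = coset₁₂ ∧ k' = coset₂) ∧ i = 8 := by
  decide +revert

set_option synthInstance.maxSize 1000 in
theorem eq_or_pentagon_of_mem_edges {k k' : FaceKind} {i j : Fin 9} (hk : k ≠ k')
    (hi : i ∈ edges k) (hi' : i ∈ edges k') (hj : j ∈ edges k) (hj' : j ∈ edges k') :
    i = j ∨ (k = pentagon ∧ k' = coset₁₂ ∨ k = coset₁₂ ∧ k' = pentagon) ∧
        (i = 4 ∧ j = 6 ∨ i = 6 ∧ j = 4) := by
  decide +revert

theorem pathEdges_block (g1 g2 : G) (k : FaceKind) (y : G) :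
    pathEdges (block g1 k y ++ (block g1 k (y * period g1 g2 k)).take 1) =
      (edges k).map fun i => edge g1 g2 i (y * offset g1 k i) := by
  cases k <;>
    simp [block, period, edges, offset, edge, edgeEnds, voltage, mul_assoc, Sym2.eq_swap]

end FaceKind

open FaceKind

variable {G : Type*} [Group G] {g1 g2 : G}

theorem edgeEnds_fst_lt_snd (i : Fin 9) : (edgeEnds i).1 < (edgeEnds i).2 := by
  decide +revert

theorem edge_inj (h2 : g2 ≠ 1) {i j : Fin 9} {x y : G} :
    edge g1 g2 i x = edge g1 g2 j y ↔ i = j ∧ x = y := by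
  refine ⟨fun h => ?_, by rintro ⟨rfl, rfl⟩; rfl⟩
  have hpar (i j) : edgeEnds i = edgeEnds j → i = j ∨ (i = 5 ∧ j = 8) ∨ (i = 8 ∧ j = 5) := by
    decide +revert
  simp only [edge, Sym2.eq_iff, Prod.mk.injEq] at h
  obtain ⟨⟨h₁, rfl⟩, h₂, hv⟩ | ⟨⟨h₁, -⟩, h₂, -⟩ := h
  · obtain rfl | ⟨rfl, rfl⟩ | ⟨rfl, rfl⟩ := hpar i j (Prod.ext h₁ h₂)
    · exact ⟨rfl, rfl⟩
    all_goals simp [voltage, h2] at hv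
  · have := edgeEnds_fst_lt_snd i
    rw [h₁, h₂] at this
    exact absurd this (edgeEnds_fst_lt_snd j).asymm

theorem fruchtGraph_eq_fromEdgeSet (g1 g2 : G) :
    fruchtGraph G g1 g2 =
      SimpleGraph.fromEdgeSet (⋃ x, Set.range fun i => edge g1 g2 i x) := by
  unfold fruchtGraph
  congr! with x
  ext e
  simp [edge, edgeEnds, voltage, Fin.exists_fin_succ, eq_comm (b := e)]

theorem mem_edgeSet_fruchtGraph {e : Sym2 (Fin 6 × G)} :
    e ∈ (fruchtGraph G g1 g2).edgeSet ↔ ∃ i x, edge g1 g2 i x = e := by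
  rw [fruchtGraph_eq_fromEdgeSet, SimpleGraph.edgeSet_fromEdgeSet, Set.mem_sdiff]
  simp only [Set.mem_iUnion, Set.mem_range]
  rw [exists_comm, and_iff_left_iff_imp]
  rintro ⟨i, x, rfl⟩
  simp [edge, (edgeEnds_fst_lt_snd i).ne]

theorem block_ne_nil (g1 : G) (k : FaceKind) (y : G) : block g1 k y ≠ [] := by
  cases k <;> simp [block]

theorem nodup_block (g1 : G) (k : FaceKind) (y : G) : (block g1 k y).Nodup := by
  cases k <;> simp [block]

theorem pairwise_disjoint_block (g1 : G) (k : FaceKind) :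
    Pairwise fun y z => (block g1 k y).Disjoint (block g1 k z) := by
  intro y z hyz
  cases k <;> simp [block, hyz.symm]

theorem length_block (g1 : G) (k : FaceKind) (y : G) :
    (block g1 k y).length = (edges k).length := by
  cases k <;> rfl

theorem map_block (g1 m : G) (k : FaceKind) (y : G) :
    (block g1 k y).map (fun v => (v.1, m * v.2)) = block g1 k (m * y) := by
  cases k <;> simp [block, mul_assoc]

/-- The face of kind `k` indexed by a coset of its period; a triangle or pentagon is thus indexed by
a coset of the trivial group. -/
noncomputable def face (g1 g2 : G) (k : FaceKind) (q : G ⧸ Subgroup.zpowers (period g1 g2 k)) :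
    List (Fin 6 × G) :=
  orbitCycle (period g1 g2 k) (block g1 k) q.out

theorem mem_cycleEdges_face [Finite G] {k : FaceKind} {q : G ⧸ Subgroup.zpowers (period g1 g2 k)}
    {e : Sym2 (Fin 6 × G)} :
    e ∈ cycleEdges (face g1 g2 k q) ↔ ∃ i x, (i ∈ edges k ∧
      ((x * (offset g1 k i)⁻¹ : G) : G ⧸ Subgroup.zpowers (period g1 g2 k)) = q) ∧
        edge g1 g2 i x = e := by
  have hfin : IsOfFinOrder (period g1 g2 k) := isOfFinOrder_of_finite _
  rw [face, cycleEdges_orbitCycle _ (block_ne_nil g1 k)]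
  simp only [pathEdges_block, mem_orbitCycle hfin, QuotientGroup.out_eq', List.mem_map]
  constructor
  · rintro ⟨y, hy, i, hi, rfl⟩
    exact ⟨i, y * offset g1 k i, ⟨hi, by rwa [mul_inv_cancel_right]⟩, rfl⟩
  · rintro ⟨i, x, ⟨hi, hx⟩, rfl⟩
    exact ⟨x * (offset g1 k i)⁻¹, hx, i, hi, by rw [inv_mul_cancel_right]⟩

theorem edge_mem_cycleEdges_face [Finite G] (h2 : g2 ≠ 1) {k : FaceKind}
    {q : G ⧸ Subgroup.zpowers (period g1 g2 k)} {i : Fin 9} {x : G} :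
    edge g1 g2 i x ∈ cycleEdges (face g1 g2 k q) ↔ i ∈ edges k ∧
      ((x * (offset g1 k i)⁻¹ : G) : G ⧸ Subgroup.zpowers (period g1 g2 k)) = q := by
  simp only [mem_cycleEdges_face, edge_inj h2]
  constructor
  · rintro ⟨_, _, h, rfl, rfl⟩
    exact h
  · exact fun h => ⟨i, x, h, rfl, rfl⟩

theorem isCycleList_face [Finite G] (h2 : g2 ≠ 1) (k : FaceKind)
    (q : G ⧸ Subgroup.zpowers (period g1 g2 k)) :
    IsCycleList (fruchtGraph G g1 g2) (face g1 g2 k q) := by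
  refine ⟨?_, nodup_orbitCycle _ (nodup_block g1 k) (pairwise_disjoint_block g1 k) _, ?_⟩
  · rw [face, length_orbitCycle _ (length_block g1 k)]
    have hpos (c : G) : 0 < orderOf c := orderOf_pos c
    have hg2 : orderOf g2 ≠ 1 := mt orderOf_eq_one_iff.mp h2
    cases k <;> simp only [edges, period, List.length_cons, List.length_nil] <;> grind
  · intro e he
    obtain ⟨i, x, -, rfl⟩ := mem_cycleEdges_face.mp he
    exact mem_edgeSet_fruchtGraph.mpr ⟨i, x, rfl⟩

theorem sum_map_cosetCycles_ite_mem [Finite G] (h2 : g2 ≠ 1) {k : FaceKind} {i : Fin 9} {x : G}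
    [Fintype (G ⧸ Subgroup.zpowers (period g1 g2 k))]
    {_ : DecidablePred fun l => edge g1 g2 i x ∈ cycleEdges l} :
    ((cosetCycles (period g1 g2 k) (block g1 k)).map fun l =>
      if edge g1 g2 i x ∈ cycleEdges l then 1 else 0).sum = if i ∈ edges k then 1 else 0 := by
  classical
  have hface (q : G ⧸ Subgroup.zpowers (period g1 g2 k)) :
      edge g1 g2 i x ∈ cycleEdges (orbitCycle (period g1 g2 k) (block g1 k) q.out) ↔
        i ∈ edges k ∧
          ((x * (offset g1 k i)⁻¹ : G) : G ⧸ Subgroup.zpowers (period g1 g2 k)) = q :=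
    edge_mem_cycleEdges_face h2
  simp only [cosetCycles, Multiset.map_map, Function.comp_def, hface, Finset.sum_map_val]
  by_cases hi : i ∈ edges k <;> simp [hi]

section Cover

variable [Fintype G]

open scoped Classical in
theorem fruchtCDC_eq_bind (g1 g2 : G) :
    fruchtCDC G g1 g2 = (Finset.univ : Finset FaceKind).val.bind fun k =>
      cosetCycles (period g1 g2 k) (block g1 k) := by
  have huniv : (Finset.univ : Finset FaceKind).val =
    {triangle, pentagon, coset₂, coset₁, coset₁₂} := by decide
  simp only [huniv, Multiset.insert_eq_cons, Multiset.cons_bind, Multiset.singleton_bind,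
    ← add_assoc]
  change _ = cosetCycles 1 (block g1 triangle) + cosetCycles 1 (block g1 pentagon) +
    cosetCycles g2 (block g1 coset₂) + cosetCycles g1 (block g1 coset₁) +
    cosetCycles (g1 * g2) (block g1 coset₁₂)
  rw [cosetCycles_one, cosetCycles_one]
  rfl

theorem mem_fruchtCDC {l : List (Fin 6 × G)} :
    l ∈ fruchtCDC G g1 g2 ↔ ∃ k q, face g1 g2 k q = l := by
  classical
  simp [fruchtCDC_eq_bind, mem_cosetCycles, face]

theorem isCycleDoubleCover_fruchtCDC (h2 : g2 ≠ 1) :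
    IsCycleDoubleCover (fruchtGraph G g1 g2) (fruchtCDC G g1 g2) := by
  classical
  constructor
  · intro l hl
    obtain ⟨k, q, rfl⟩ := mem_fruchtCDC.mp hl
    exact isCycleList_face h2 k q
  · intro e he
    obtain ⟨i, x, rfl⟩ := mem_edgeSet_fruchtGraph.mp he
    rw [fruchtCDC_eq_bind, Multiset.map_bind, Multiset.sum_bind, Finset.sum_map_val]
    refine (Finset.sum_congr rfl fun k _ => sum_map_cosetCycles_ite_mem h2).trans ?_
    simp only [Finset.sum_boole, card_filter_mem_edges, Nat.cast_id]

theorem rel_isRotated_map_fruchtCDC (g1 g2 m : G) :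
    Multiset.Rel List.IsRotated ((fruchtCDC G g1 g2).map (List.map fun v => (v.1, m * v.2)))
      (fruchtCDC G g1 g2) := by
  classical
  rw [fruchtCDC_eq_bind, Multiset.map_bind]
  refine Multiset.rel_bind (r := Eq) ?_ (Multiset.rel_eq.mpr rfl)
  rintro k _ rfl
  exact rel_isRotated_map_cosetCycles (map_block g1 m k)

end Cover

theorem left_notMem_zpowers_mul (h2 : g2 ≠ 1)
    (hd2 : Disjoint (Subgroup.zpowers g2) (Subgroup.zpowers (g1 * g2))) :
    g1 ∉ Subgroup.zpowers (g1 * g2) := by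
  intro h
  refine h2 (Subgroup.disjoint_def.mp hd2 (Subgroup.mem_zpowers g2) ?_)
  exact (Subgroup.mul_mem_cancel_left _ h).mp (Subgroup.mem_zpowers (g1 * g2))

theorem eq_one_of_conj_mem_zpowers_mul
    (hd2 : Disjoint (Subgroup.zpowers g2) (Subgroup.zpowers (g1 * g2))) {z : G}
    (hz : z ∈ Subgroup.zpowers g2) (hz' : g1 * z * g1⁻¹ ∈ Subgroup.zpowers (g1 * g2)) : z = 1 := by
  obtain ⟨n, rfl⟩ := hz
  refine Subgroup.disjoint_def.mp hd2 ⟨n, rfl⟩ ?_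
  have hc := Subgroup.mem_zpowers (g1 * g2)
  convert mul_mem (mul_mem (inv_mem hc) hz') hc using 1
  group

/-- Applied to `z = x⁻¹ * y` for edges of orbits `i`, `j` with base points `x`, `y` that both lie on
a face of kind `k` and on a face of kind `k'`. -/
theorem eq_and_eq_one_of_mem_edges (h2 : g2 ≠ 1)
    (hd1 : Disjoint (Subgroup.zpowers g1) (Subgroup.zpowers (g1 * g2)))
    (hd2 : Disjoint (Subgroup.zpowers g2) (Subgroup.zpowers (g1 * g2)))
    {k k' : FaceKind} (hk : k ≠ k') {i j : Fin 9} (hi : i ∈ edges k) (hi' : i ∈ edges k')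
    (hj : j ∈ edges k) (hj' : j ∈ edges k') {z : G}
    (hz : offset g1 k i * z * (offset g1 k j)⁻¹ ∈ Subgroup.zpowers (period g1 g2 k))
    (hz' : offset g1 k' i * z * (offset g1 k' j)⁻¹ ∈ Subgroup.zpowers (period g1 g2 k')) :
    i = j ∧ z = 1 := by
  obtain rfl | ⟨hkinds, hij⟩ := eq_or_pentagon_of_mem_edges hk hi hi' hj hj'
  · refine ⟨rfl, ?_⟩
    obtain (rfl | rfl) | (rfl | rfl) | ⟨⟨rfl, rfl⟩ | ⟨rfl, rfl⟩, rfl⟩ |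
        ⟨⟨rfl, rfl⟩ | ⟨rfl, rfl⟩, rfl⟩ := disk_or_coset_of_mem_edges hk hi hi' <;>
      simp only [offset, period, inv_one, one_mul, mul_one, Subgroup.zpowers_one_eq_bot,
        Subgroup.mem_bot] at hz hz'
    · exact hz
    · exact hz
    · exact hz'
    · exact hz'
    · exact Subgroup.disjoint_def.mp hd1 hz hz'
    · exact Subgroup.disjoint_def.mp hd1 hz' hz
    · exact eq_one_of_conj_mem_zpowers_mul hd2 hz hz'
    · exact eq_one_of_conj_mem_zpowers_mul hd2 hz' hz
  · have hg1 := left_notMem_zpowers_mul h2 hd2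
    obtain ⟨rfl, rfl⟩ | ⟨rfl, rfl⟩ := hkinds <;> obtain ⟨rfl, rfl⟩ | ⟨rfl, rfl⟩ := hij <;>
      simp_all [offset, period]

theorem subsingleton_common_edges [Finite G] (h2 : g2 ≠ 1)
    (hd1 : Disjoint (Subgroup.zpowers g1) (Subgroup.zpowers (g1 * g2)))
    (hd2 : Disjoint (Subgroup.zpowers g2) (Subgroup.zpowers (g1 * g2)))
    {k k' : FaceKind} {q : G ⧸ Subgroup.zpowers (period g1 g2 k)}
    {q' : G ⧸ Subgroup.zpowers (period g1 g2 k')} (hne : face g1 g2 k q ≠ face g1 g2 k' q') :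
    {e | e ∈ cycleEdges (face g1 g2 k q) ∧ e ∈ cycleEdges (face g1 g2 k' q')}.Subsingleton := by
  rintro e ⟨he, he'⟩ f ⟨hf, hf'⟩
  obtain ⟨i, x, ⟨hi, hx⟩, rfl⟩ := mem_cycleEdges_face.mp he
  obtain ⟨j, y, ⟨hj, hy⟩, rfl⟩ := mem_cycleEdges_face.mp hf
  obtain ⟨hi', hx'⟩ := (edge_mem_cycleEdges_face h2).mp he'
  obtain ⟨hj', hy'⟩ := (edge_mem_cycleEdges_face h2).mp hf'
  have hk : k ≠ k' := by
    rintro rfl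
    exact hne (by rw [← hx, hx'])
  have hxy {k : FaceKind}
      (h : ((x * (offset g1 k i)⁻¹ : G) : G ⧸ Subgroup.zpowers (period g1 g2 k)) =
        (y * (offset g1 k j)⁻¹ : G)) :
      offset g1 k i * (x⁻¹ * y) * (offset g1 k j)⁻¹ ∈ Subgroup.zpowers (period g1 g2 k) := by
    simpa [mul_assoc] using QuotientGroup.eq.mp h
  obtain ⟨rfl, h⟩ := eq_and_eq_one_of_mem_edges h2 hd1 hd2 hk hi hi' hj hj'
    (hxy (hx.trans hy.symm)) (hxy (hx'.trans hy'.symm))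
  rw [inv_mul_eq_one.mp h]

end Frucht

theorem fruchtCDC_isCycleDoubleCover_general
    (G : Type*) [Group G] [Fintype G] (g1 g2 : G) (h2 : g2 ≠ 1) :
    IsCycleDoubleCover (fruchtGraph G g1 g2) (fruchtCDC G g1 g2) ∧
    (∀ m : G,
      Multiset.Rel (fun l₁ l₂ => ∃ k, l₁.rotate k = l₂)
        ((fruchtCDC G g1 g2).map (List.map fun v => (v.1, m * v.2)))
        (fruchtCDC G g1 g2)) ∧
    ((Subgroup.zpowers g1 ⊓ Subgroup.zpowers (g1 * g2) = ⊥ ∧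
      Subgroup.zpowers g2 ⊓ Subgroup.zpowers (g1 * g2) = ⊥) →
      ∀ l₁ ∈ fruchtCDC G g1 g2, ∀ l₂ ∈ fruchtCDC G g1 g2, l₁ ≠ l₂ →
        {e | e ∈ cycleEdges l₁ ∧ e ∈ cycleEdges l₂}.ncard ≤ 1) := by
  refine ⟨Frucht.isCycleDoubleCover_fruchtCDC h2, Frucht.rel_isRotated_map_fruchtCDC g1 g2, ?_⟩
  rintro ⟨hd1, hd2⟩ l₁ hl₁ l₂ hl₂ hne
  obtain ⟨k, q, rfl⟩ := Frucht.mem_fruchtCDC.mp hl₁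
  obtain ⟨k', q', rfl⟩ := Frucht.mem_fruchtCDC.mp hl₂
  exact Set.ncard_le_one_iff_subsingleton.mpr
    (Frucht.subsingleton_common_edges h2 (disjoint_iff.mpr hd1) (disjoint_iff.mpr hd2) hne)

/-- The family `fruchtCDC` is a cycle double cover of the simplified Frucht graph; it is
invariant (as a family of cyclic sequences, i.e. up to rotation) under every automorphism
`σ_m : (i,h) ↦ (i,m·h)`; and if `⟨g1⟩ ⊓ ⟨g1·g2⟩` and `⟨g2⟩ ⊓ ⟨g1·g2⟩` are trivial, then
no two distinct cycles of the cover share more than one common edge. -/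
theorem fruchtCDC_isCycleDoubleCover
    (G : Type*) [Group G] [Fintype G] (g1 g2 : G)
    (hne : g1 ≠ g2) (h1 : g1 ≠ 1) (h2 : g2 ≠ 1)
    (hgen : Subgroup.closure {g1, g2} = ⊤) :
    IsCycleDoubleCover (fruchtGraph G g1 g2) (fruchtCDC G g1 g2) ∧
    (∀ m : G,
      Multiset.Rel (fun l₁ l₂ => ∃ k, l₁.rotate k = l₂)
        ((fruchtCDC G g1 g2).map (List.map fun v => (v.1, m * v.2)))
        (fruchtCDC G g1 g2)) ∧
    ((Subgroup.zpowers g1 ⊓ Subgroup.zpowers (g1 * g2) = ⊥ ∧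
      Subgroup.zpowers g2 ⊓ Subgroup.zpowers (g1 * g2) = ⊥) →
      ∀ l₁ ∈ fruchtCDC G g1 g2, ∀ l₂ ∈ fruchtCDC G g1 g2, l₁ ≠ l₂ →
        {e | e ∈ cycleEdges l₁ ∧ e ∈ cycleEdges l₂}.ncard ≤ 1) :=
  fruchtCDC_isCycleDoubleCover_general G g1 g2 h2
end

section
/- For every integer n ≥ 3, the graph Γ_{C_n} is cubic (3-regular) and its automorphism group is isomorphic to the cyclic group of order n; it is generated by the automorphism sending each vertex (x, i) to (x, i+1). -/
/-- The graph `Γ_{C_n}` on vertex set `{a,b,c,d,e,f} × (ℤ/nℤ)` (the labels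
`a,b,c,d,e,f` are encoded as `0,1,2,3,4,5 : Fin 6`), with edges, for every `i`:
`{a_i,b_i}, {a_i,e_i}, {a_i,f_i}, {b_i,f_i}, {c_i,d_i}, {c_i,f_i}, {c_i,e_i},
{e_i,b_{i+1}}, {d_i,d_{i+1}}`. -/
def cnGraph (n : ℕ) : SimpleGraph (Fin 6 × ZMod n) :=
  SimpleGraph.fromEdgeSet (⋃ i : ZMod n,
    {s((0, i), (1, i)), s((0, i), (4, i)), s((0, i), (5, i)), s((1, i), (5, i)),
     s((2, i), (3, i)), s((2, i), (5, i)), s((2, i), (4, i)),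
     s((4, i), (1, i + 1)), s((3, i), (3, i + 1))})

/-!
Call a triangle and a 4-cycle sharing exactly one edge a house; the vertex of the triangle off that
edge is the roof. If `n ≠ 1`, the only houses in `Γ_{C_n}` are those on `a_i, b_i, c_i, e_i, f_i`,
with roof `b_i`. An automorphism `φ` therefore carries the house of column `i` to that of some
column `j`. The reflected case `φ e_i = c_j` cannot occur, because `e_i` is adjacent to the roof
`b_{i+1}` while `c_j` is adjacent to no roof. So `φ` preserves the labels of the house, hence also
that of `d_i`, the remaining neighbour of `c_i`, and the edge `e_i b_{i+1}` forces column `i + 1` to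
go to column `j + 1`: `φ` is a rotation.
-/

/-- A house in a graph: the triangle `r u v` with roof `r` on top of the 4-cycle `u x y v`,
the five vertices being distinct. It need not be an induced subgraph. -/
def IsHouse {V : Type*} (G : SimpleGraph V) (r u v x y : V) : Prop :=
  (G.Adj r u ∧ G.Adj r v ∧ G.Adj u v ∧ G.Adj u x ∧ G.Adj v y ∧ G.Adj x y) ∧
    [r, u, v, x, y].Nodup

theorem IsHouse.map {V W : Type*} {G : SimpleGraph V} {H : SimpleGraph W} {r u v x y : V}
    (h : IsHouse G r u v x y) (φ : G.Copy H) : IsHouse H (φ r) (φ u) (φ v) (φ x) (φ y) := by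
  obtain ⟨⟨hru, hrv, huv, hux, hvy, hxy⟩, hnodup⟩ := h
  have hφ {p q : V} (hpq : G.Adj p q) : H.Adj (φ p) (φ q) := φ.toHom.map_adj hpq
  exact ⟨⟨hφ hru, hφ hrv, hφ huv, hφ hux, hφ hvy, hφ hxy⟩, hnodup.map φ.injective⟩

namespace cnGraph

variable {n : ℕ}

/-- The vertices joined to a given vertex by the edge list of `Γ_{C_n}`. For `n = 1` this includes
`d_i` itself as a neighbour of `d_i`. -/
def neighbors : Fin 6 × ZMod n → Finset (Fin 6 × ZMod n)
  | (0, i) => {(1, i), (4, i), (5, i)}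
  | (1, i) => {(0, i), (5, i), (4, i - 1)}
  | (2, i) => {(3, i), (5, i), (4, i)}
  | (3, i) => {(2, i), (3, i - 1), (3, i + 1)}
  | (4, i) => {(0, i), (2, i), (1, i + 1)}
  | (5, i) => {(0, i), (1, i), (2, i)}

theorem adj_iff {v w : Fin 6 × ZMod n} : (cnGraph n).Adj v w ↔ v ≠ w ∧ w ∈ neighbors v := by
  rw [cnGraph, SimpleGraph.fromEdgeSet_adj, and_comm]
  refine and_congr_right fun _ ↦ ?_
  simp only [Set.mem_iUnion, Set.mem_insert_iff, Set.mem_singleton_iff, Sym2.eq_iff]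
  constructor
  · rintro ⟨i, h⟩
    rcases h with h | h | h | h | h | h | h | h | h <;>
      rcases h with ⟨rfl, rfl⟩ | ⟨rfl, rfl⟩ <;> simp [neighbors]
  · intro hw
    match v with
    | (0, i) | (1, i) | (2, i) | (3, i) | (4, i) | (5, i) =>
      simp only [neighbors, Finset.mem_insert, Finset.mem_singleton] at hw
      rcases hw with rfl | rfl | rfl <;>
        first
        | (use i; simp; done)
        | (use i - 1; simp)

theorem adj_iff_mem_neighbors [Nontrivial (ZMod n)] {v w : Fin 6 × ZMod n} :
    (cnGraph n).Adj v w ↔ w ∈ neighbors v := by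
  have self_notMem : v ∉ neighbors v := by
    match v with
    | (0, i) | (1, i) | (2, i) | (3, i) | (4, i) | (5, i) => simp [neighbors, eq_sub_iff_add_eq]
  rw [adj_iff, and_iff_right_of_imp]
  rintro hw rfl
  exact self_notMem hw

theorem adj_e_b_add_one (i : ZMod n) : (cnGraph n).Adj (4, i) (1, i + 1) := by
  simp [adj_iff, neighbors]

theorem adj_c_d (i : ZMod n) : (cnGraph n).Adj (2, i) (3, i) := by
  simp [adj_iff, neighbors]

theorem card_neighbors (h2 : (2 : ZMod n) ≠ 0) (v : Fin 6 × ZMod n) : (neighbors v).card = 3 := by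
  have pred_ne_succ (i : ZMod n) : i - 1 ≠ i + 1 := fun h ↦ h2 (by linear_combination -h)
  match v with
  | (0, i) | (1, i) | (2, i) | (3, i) | (4, i) | (5, i) => simp [neighbors, pred_ne_succ]

theorem isRegularOfDegree_three [(cnGraph n).LocallyFinite] (h2 : (2 : ZMod n) ≠ 0) :
    (cnGraph n).IsRegularOfDegree 3 := by
  have : Nontrivial (ZMod n) := nontrivial_of_ne _ _ h2
  intro v
  have neighborFinset_eq : (cnGraph n).neighborFinset v = neighbors v := by
    ext w
    rw [SimpleGraph.mem_neighborFinset, adj_iff_mem_neighbors]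
  rw [← SimpleGraph.card_neighborFinset_eq_degree, neighborFinset_eq, card_neighbors h2]

theorem add_mem_neighbors_add_iff {v w : Fin 6 × ZMod n} (k : ZMod n) :
    w + (0, k) ∈ neighbors (v + (0, k)) ↔ w ∈ neighbors v := by
  obtain ⟨x, i⟩ := v
  obtain ⟨y, j⟩ := w
  simp only [Prod.mk_add_mk, add_zero]
  match x with
  | 0 | 1 | 2 | 3 | 4 | 5 => simp [neighbors, add_right_comm i k, add_sub_right_comm i k]

/-- The action of `ℤ/nℤ` on `Γ_{C_n}` by rotations, `k` sending `(x, i)` to `(x, i + k)`. -/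
def rotation : Multiplicative (ZMod n) →* (cnGraph n ≃g cnGraph n) where
  toFun k :=
    { toEquiv := Equiv.addRight (0, k.toAdd)
      map_rel_iff' := by simp [adj_iff, add_mem_neighbors_add_iff] }
  map_one' := by ext v <;> simp
  map_mul' k l := by ext v <;> simp [add_left_comm, add_comm]

theorem rotation_apply (k : Multiplicative (ZMod n)) (v : Fin 6 × ZMod n) :
    rotation k v = (v.1, v.2 + k.toAdd) :=
  Prod.ext (add_zero v.1) rfl

theorem rotation_injective : Function.Injective (rotation (n := n)) := by
  intro k l h
  simpa [rotation_apply] using DFunLike.congr_fun h 0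

section Rigidity

variable [Nontrivial (ZMod n)]

theorem isHouse_column (i : ZMod n) :
    IsHouse (cnGraph n) (1, i) (0, i) (5, i) (4, i) (2, i) := by
  simp [IsHouse, adj_iff_mem_neighbors, neighbors]

theorem labels_of_triangle {r u v : Fin 6 × ZMod n}
    (hru : (cnGraph n).Adj r u) (hrv : (cnGraph n).Adj r v) (huv : (cnGraph n).Adj u v) :
    (r.1 = 3 ∧ u.1 = 3 ∧ v.1 = 3) ∨
      (u.2 = r.2 ∧ v.2 = r.2 ∧ ({r.1, u.1, v.1} : Finset (Fin 6)) = {0, 1, 5}) := by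
  rw [adj_iff_mem_neighbors] at hru hrv huv
  match r with
  | (0, i) | (1, i) | (2, i) | (3, i) | (4, i) | (5, i) =>
    simp only [neighbors, Finset.mem_insert, Finset.mem_singleton] at hru hrv
    rcases hru with rfl | rfl | rfl <;> rcases hrv with rfl | rfl | rfl <;>
      simp [neighbors, eq_sub_iff_add_eq] at huv <;>
      first
      | exact .inl ⟨rfl, rfl, rfl⟩
      | exact .inr ⟨rfl, rfl, by dsimp only <;> decide⟩

theorem eq_c_of_adj_d {p q x : Fin 6 × ZMod n} {i : ZMod n} (hp : (cnGraph n).Adj (3, i) p)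
    (hq : (cnGraph n).Adj (3, i) q) (hx : (cnGraph n).Adj (3, i) x) (hp_label : p.1 = 3)
    (hq_label : q.1 = 3) (hpq : p ≠ q) (hpx : p ≠ x) (hqx : q ≠ x) : x = (2, i) := by
  simp only [adj_iff_mem_neighbors, neighbors, Finset.mem_insert, Finset.mem_singleton]
    at hp hq hx
  -- Being distinct, `p` and `q` exhaust `d_{i-1}` and `d_{i+1}`.
  grind

theorem not_isHouse_of_labels_eq_d {r x y : Fin 6 × ZMod n} {i j : ZMod n} (hr : r.1 = 3) :
    ¬ IsHouse (cnGraph n) r (3, i) (3, j) x y := by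
  rintro ⟨⟨hru, hrv, huv, hux, hvy, hxy⟩, hnodup⟩
  have hx : x = (2, i) := by
    apply eq_c_of_adj_d hru.symm huv hux hr rfl <;> grind
  have hy : y = (2, j) := by
    apply eq_c_of_adj_d hrv.symm huv.symm hvy hr rfl <;> grind
  simp [hx, hy, adj_iff_mem_neighbors, neighbors] at hxy

theorem eq_column_of_isHouse {r u v x y : Fin 6 × ZMod n} (h : IsHouse (cnGraph n) r u v x y) :
    ∃ i, r = (1, i) ∧ (u = (0, i) ∧ v = (5, i) ∧ x = (4, i) ∧ y = (2, i) ∨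
      u = (5, i) ∧ v = (0, i) ∧ x = (2, i) ∧ y = (4, i)) := by
  obtain ⟨r, i⟩ := r
  obtain ⟨u, j⟩ := u
  obtain ⟨v, k⟩ := v
  have ⟨⟨hru, hrv, huv, hux, hvy, hxy⟩, hnodup⟩ := h
  obtain ⟨hr, rfl, rfl⟩ | ⟨rfl, rfl, hlabels⟩ := labels_of_triangle hru hrv huv
  · exact absurd h (not_isHouse_of_labels_eq_d hr)
  have orderings : ∀ p q s : Fin 6, ({p, q, s} : Finset (Fin 6)) = {0, 1, 5} →
      p = 1 ∧ q = 0 ∧ s = 5 ∨ p = 1 ∧ q = 5 ∧ s = 0 ∨ p = 0 ∧ q = 1 ∧ s = 5 ∨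
      p = 0 ∧ q = 5 ∧ s = 1 ∨ p = 5 ∧ q = 0 ∧ s = 1 ∨ p = 5 ∧ q = 1 ∧ s = 0 := by decide
  rw [adj_iff_mem_neighbors] at hux hvy hxy
  -- Off the triangle, `a_i`, `b_i`, `f_i` have the neighbours `e_i`, `e_{i-1}`, `c_i`, of which
  -- only `e_i` and `c_i` are adjacent: the roof is `b_i`.
  rcases orderings r u v hlabels with ⟨rfl, rfl, rfl⟩ | ⟨rfl, rfl, rfl⟩ | ⟨rfl, rfl, rfl⟩ |
      ⟨rfl, rfl, rfl⟩ | ⟨rfl, rfl, rfl⟩ | ⟨rfl, rfl, rfl⟩ <;>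
    simp only [neighbors, Finset.mem_insert, Finset.mem_singleton] at hux hvy <;>
    rcases hux with rfl | rfl | rfl <;> rcases hvy with rfl | rfl | rfl <;>
    simp [neighbors, eq_sub_iff_add_eq] at hnodup hxy ⊢

theorem exists_forall_apply_eq (φ : cnGraph n ≃g cnGraph n) (i : ZMod n) :
    ∃ j, ∀ x, φ (x, i) = (x, j) := by
  have isHouse_image (i : ZMod n) :
      IsHouse (cnGraph n) (φ (1, i)) (φ (0, i)) (φ (5, i)) (φ (4, i)) (φ (2, i)) :=
    (isHouse_column i).map φ.toCopy
  obtain ⟨j, hb, ⟨ha, hf, he, hc⟩ | ⟨-, -, he, -⟩⟩ := eq_column_of_isHouse (isHouse_image i)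
  · have hd : φ (3, i) = (3, j) := by
      have hcd := φ.map_adj_iff.2 (adj_c_d i)
      have hdf : φ (3, i) ≠ (5, j) := by simp [← hf]
      have hde : φ (3, i) ≠ (4, j) := by simp [← he]
      simpa [hc, adj_iff_mem_neighbors, neighbors, hdf, hde] using hcd
    refine ⟨j, fun x ↦ ?_⟩
    fin_cases x <;> assumption
  · obtain ⟨k, hb_succ, -⟩ := eq_column_of_isHouse (isHouse_image (i + 1))
    have heb := φ.map_adj_iff.2 (adj_e_b_add_one i)
    simp [he, hb_succ, adj_iff_mem_neighbors, neighbors] at heb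

theorem rotation_surjective : Function.Surjective (rotation (n := n)) := by
  intro φ
  choose shift hshift using exists_forall_apply_eq φ
  have shift_add_one (i : ZMod n) : shift (i + 1) = shift i + 1 := by
    have heb := φ.map_adj_iff.2 (adj_e_b_add_one i)
    simpa [hshift, adj_iff_mem_neighbors, neighbors] using heb
  have shift_eq (i : ZMod n) : shift i = i + shift 0 := by
    obtain ⟨m, rfl⟩ := ZMod.intCast_surjective i
    let f : AddConstMap (ZMod n) (ZMod n) 1 1 := ⟨shift, shift_add_one⟩
    have shift_int_add : shift (m + 0) = shift 0 + m := AddConstMapClass.map_int_add f m 0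
    simpa [add_comm] using shift_int_add
  refine ⟨.ofAdd (shift 0), ?_⟩
  ext1 ⟨x, i⟩
  simp [rotation_apply, hshift, shift_eq i]

theorem zpowers_rotation_one :
    Subgroup.zpowers (rotation (n := n) (.ofAdd 1)) = ⊤ := by
  have hgen : Subgroup.zpowers (Multiplicative.ofAdd (1 : ZMod n)) = ⊤ := by
    refine (Subgroup.eq_top_iff' _).2 fun k ↦ ?_
    obtain ⟨m, hm⟩ := ZMod.intCast_surjective k.toAdd
    exact ⟨m, by simp [← ofAdd_zsmul, hm]⟩
  rw [← MonoidHom.map_zpowers, hgen, Subgroup.map_top_of_surjective _ rotation_surjective]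

end Rigidity

end cnGraph

/-- Since `ZMod 0` is `ℤ`, the case `n = 0` is that of the infinite graph `Γ` with columns
indexed by `ℤ`. -/
theorem cnGraph_isRegular_and_aut_general (n : ℕ) [(cnGraph n).LocallyFinite] (h1 : n ≠ 1)
    (h2 : n ≠ 2) :
    (cnGraph n).IsRegularOfDegree 3 ∧
    ∃ ρ : cnGraph n ≃g cnGraph n,
      (∀ v : Fin 6 × ZMod n, ρ v = (v.1, v.2 + 1)) ∧
      Subgroup.zpowers ρ = ⊤ ∧
      Nonempty ((cnGraph n ≃g cnGraph n) ≃* Multiplicative (ZMod n)) := by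
  have two_ne_zero : (2 : ZMod n) ≠ 0 := by
    intro h
    have hdvd : n ∣ 2 := (ZMod.natCast_eq_zero_iff 2 n).1 (mod_cast h)
    exact ((Nat.dvd_prime Nat.prime_two).1 hdvd).elim h1 h2
  have : Nontrivial (ZMod n) := ZMod.nontrivial_iff.2 h1
  exact ⟨cnGraph.isRegularOfDegree_three two_ne_zero, cnGraph.rotation (.ofAdd 1),
    cnGraph.rotation_apply _, cnGraph.zpowers_rotation_one,
    ⟨(MulEquiv.ofBijective cnGraph.rotation
      ⟨cnGraph.rotation_injective, cnGraph.rotation_surjective⟩).symm⟩⟩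

open scoped Classical in
/-- For `n ≥ 3`, the graph `Γ_{C_n}` is cubic and its automorphism group is isomorphic
to the cyclic group of order `n`, generated by the automorphism `(x,i) ↦ (x,i+1)`. -/
theorem cnGraph_isRegular_and_aut (n : ℕ) [NeZero n] (hn : 3 ≤ n) :
    (cnGraph n).IsRegularOfDegree 3 ∧
    ∃ ρ : cnGraph n ≃g cnGraph n,
      (∀ v : Fin 6 × ZMod n, ρ v = (v.1, v.2 + 1)) ∧
      Subgroup.zpowers ρ = ⊤ ∧
      Nonempty ((cnGraph n ≃g cnGraph n) ≃* Multiplicative (ZMod n)) := by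
  exact cnGraph_isRegular_and_aut_general n (by lia) (by lia)
end

section
/- For every integer n ≥ 3, the graph Γ_{C_n} admits a cycle double cover consisting of 3n+2 cycles, namely: for each i ∈ ℤ/nℤ the triangle (a_i,b_i,f_i), the 4-cycle (a_i,f_i,c_i,e_i), and the 7-cycle (e_i,c_i,d_i,d_{i+1},c_{i+1},f_{i+1},b_{i+1}); the n-cycle (d_1,d_2,…,d_n); and the 3n-cycle (b_1,a_1,e_1,b_2,a_2,e_2,…,b_n,a_n,e_n). In particular every edge of Γ_{C_n} lies on exactly two of these cycles. -/
open scoped Classical in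
/-- The explicit cycle double cover of `Γ_{C_n}`: for each `i` the triangle
`(a_i,b_i,f_i)`, the `4`-cycle `(a_i,f_i,c_i,e_i)` and the `7`-cycle
`(e_i,c_i,d_i,d_{i+1},c_{i+1},f_{i+1},b_{i+1})`; the `n`-cycle `(d_1,…,d_n)`; and
the `3n`-cycle `(b_1,a_1,e_1,b_2,a_2,e_2,…,b_n,a_n,e_n)`. -/
noncomputable def cnCDC (n : ℕ) [NeZero n] : Multiset (List (Fin 6 × ZMod n)) :=
  (Finset.univ : Finset (ZMod n)).val.map
    (fun i => [((0 : Fin 6), i), (1, i), (5, i)]) +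
  (Finset.univ : Finset (ZMod n)).val.map
    (fun i => [((0 : Fin 6), i), (5, i), (2, i), (4, i)]) +
  (Finset.univ : Finset (ZMod n)).val.map
    (fun i => [((4 : Fin 6), i), (2, i), (3, i), (3, i + 1), (2, i + 1), (5, i + 1),
      (1, i + 1)]) +
  {(List.range n).map fun k => ((3 : Fin 6), (k : ZMod n)),
   (List.range n).flatMap fun k =>
     [((1 : Fin 6), (k : ZMod n)), (0, (k : ZMod n)), (4, (k : ZMod n))]}

/-!
A cycle with at least three vertices has no repeated edge, so a family of cycles is a double cover
as soon as its multiset of all edges is twice the edge set; consecutive vertices are then adjacent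
for free. For `Γ_{C_n}` the edges of the family are summed over `i ∈ ℤ/nℤ`. Re-indexing the three
edges of each `7`-cycle that lie in block `i + 1` gives an identity that holds block by block: the
edges counted at index `i` are the nine edges of block `i`, each taken twice.
-/

section CycleEdges

variable {V : Type*}

theorem length_cycleEdges (l : List V) : (cycleEdges l).length = l.length := by
  simp [cycleEdges]

theorem getElem_cycleEdges (l : List V) (k : ℕ) (hk : k < (cycleEdges l).length) :
    (cycleEdges l)[k] =
      s(l[k]'(length_cycleEdges l ▸ hk),
        l[(k + 1) % l.length]'(Nat.mod_lt _ (by rw [length_cycleEdges] at hk; omega))) := by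
  simp [cycleEdges, List.getElem_rotate]

theorem nodup_cycleEdges {l : List V} (hlen : 3 ≤ l.length) (hl : l.Nodup) :
    (cycleEdges l).Nodup := by
  rw [List.Nodup, List.pairwise_iff_getElem]
  intro i j hi hj hij
  rw [length_cycleEdges] at hi hj
  rw [getElem_cycleEdges, getElem_cycleEdges, Ne, Sym2.eq_iff]
  simp only [hl.getElem_inj_iff]
  rintro (⟨h, -⟩ | ⟨h, h'⟩)
  · exact hij.ne h
  -- The same edge traversed in both directions: `i ≡ j + 1` and `j ≡ i + 1`, so `2 ≡ 0`.
  · rcases (show j + 1 ≤ l.length from hj).lt_or_eq with hj' | hj'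
    · rw [Nat.mod_eq_of_lt hj'] at h
      omega
    · rw [hj', Nat.mod_self] at h
      rw [Nat.mod_eq_of_lt (by omega)] at h'
      omega

theorem isCycleDoubleCover_of_bind_cycleEdges_eq_two_nsmul {Γ : SimpleGraph V}
    {cs : Multiset (List V)} {E : Multiset (Sym2 V)}
    (hcs : ∀ l ∈ cs, 3 ≤ l.length ∧ l.Nodup)
    (hE : E.Nodup) (mem_E : ∀ e, e ∈ E ↔ e ∈ Γ.edgeSet)
    (hbind : cs.bind (fun l => (cycleEdges l : Multiset (Sym2 V))) = 2 • E) :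
    IsCycleDoubleCover Γ cs := by
  classical
  refine ⟨fun l hl => ⟨(hcs l hl).1, (hcs l hl).2, fun e he => ?_⟩, fun e he => ?_⟩
  · have he' : e ∈ 2 • E := hbind ▸ Multiset.mem_bind.2 ⟨l, hl, he⟩
    exact (mem_E e).1 (Multiset.mem_of_mem_nsmul he')
  · have ite_eq_count : ∀ l ∈ cs, (if e ∈ cycleEdges l then 1 else 0) =
        (cycleEdges l : Multiset (Sym2 V)).count e := fun l hl => by
      have hnodup := nodup_cycleEdges (hcs l hl).1 (hcs l hl).2
      simp only [Multiset.count_eq_of_nodup (Multiset.coe_nodup.2 hnodup), Multiset.mem_coe]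
    calc (cs.map fun l => if e ∈ cycleEdges l then 1 else 0).sum
        = (cs.bind fun l => (cycleEdges l : Multiset (Sym2 V))).count e := by
          rw [Multiset.count_bind, Multiset.map_congr rfl ite_eq_count]
      _ = 2 * E.count e := by rw [hbind, Multiset.count_nsmul]
      _ = 2 := by rw [Multiset.count_eq_one_of_mem hE ((mem_E e).2 he)]

theorem zipWith_tail_flatMap_range_cons {W : Type*} (f : V → V → W) (u : ℕ → V) (t : ℕ → List V)
    (n : ℕ) :
    List.zipWith f ((List.range n).flatMap fun k => u k :: t k)
        (((List.range n).flatMap fun k => u k :: t k) ++ [u n]).tail =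
      (List.range n).flatMap fun k => List.zipWith f (u k :: t k) (t k ++ [u (k + 1)]) := by
  induction n with
  | zero => rfl
  | succ n ih =>
    rw [List.range_succ, List.flatMap_append, List.flatMap_append, ← ih,
      List.flatMap_singleton, List.flatMap_singleton, ← List.zipWith_append (by simp)]
    congr 1
    cases (List.range n).flatMap fun k => u k :: t k <;> simp

theorem cycleEdges_flatMap_range_cons (u : ℕ → V) (t : ℕ → List V) {n : ℕ} (hu : u n = u 0) :
    cycleEdges ((List.range n).flatMap fun k => u k :: t k) =
      (List.range n).flatMap fun k =>
        List.zipWith (fun a b => s(a, b)) (u k :: t k) (t k ++ [u (k + 1)]) := by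
  rw [← zipWith_tail_flatMap_range_cons, cycleEdges, hu]
  cases n with
  | zero => rfl
  | succ m => simp [List.range_succ_eq_map, List.rotate_cons_succ]

end CycleEdges

theorem univ_val_bind {ι α : Type*} [Fintype ι] (f : ι → Multiset α) :
    Finset.univ.val.bind f = ∑ i, f i :=
  rfl

section Residues

/-- The elements `0, 1, …, n - 1` of `ℤ/nℤ` in cyclic order, along which the two long cycles of
`cnCDC n` run. For `n = 0` the list is empty. -/
def residues (n : ℕ) : List (ZMod n) :=
  (List.range n).map Nat.cast

-- The left side is how the coercion of `List.range n` to `List (ZMod n)` in `cnCDC` elaborates.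
theorem do_natCast_range (n : ℕ) :
    (do let k ← List.range n; pure (k : ZMod n)) = residues n :=
  List.flatMap_pure_eq_map _ _

theorem length_residues (n : ℕ) : (residues n).length = n := by
  simp [residues]

theorem nodup_residues (n : ℕ) : (residues n).Nodup := by
  refine List.Nodup.map_on (fun x hx y hy h => ?_) List.nodup_range
  rw [ZMod.natCast_eq_natCast_iff'] at h
  rwa [Nat.mod_eq_of_lt (List.mem_range.1 hx), Nat.mod_eq_of_lt (List.mem_range.1 hy)] at h

variable {n : ℕ} [NeZero n]

theorem mem_residues (j : ZMod n) : j ∈ residues n :=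
  List.mem_map.2 ⟨j.val, List.mem_range.2 j.val_lt, ZMod.natCast_zmod_val j⟩

variable (n) in
theorem coe_residues : (residues n : Multiset (ZMod n)) = Finset.univ.val :=
  ((Multiset.coe_nodup.2 (nodup_residues n)).ext Finset.univ.nodup).2 fun j => by
    simp [mem_residues]

theorem coe_cycleEdges_flatMap_residues_cons {V : Type*} (u : ZMod n → V) (t : ZMod n → List V) :
    (cycleEdges ((residues n).flatMap fun j => u j :: t j) : Multiset (Sym2 V)) =
      ∑ j, (List.zipWith (fun a b => s(a, b)) (u j :: t j) (t j ++ [u (j + 1)]) :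
        Multiset (Sym2 V)) := by
  have hlist : cycleEdges ((residues n).flatMap fun j => u j :: t j) =
      (residues n).flatMap fun j =>
        List.zipWith (fun a b => s(a, b)) (u j :: t j) (t j ++ [u (j + 1)]) := by
    simp only [residues, List.flatMap_map]
    simpa using cycleEdges_flatMap_range_cons (fun k => u k) (fun k => t k) (n := n) (by simp)
  rw [hlist, ← Multiset.coe_bind, coe_residues, univ_val_bind]

end Residues

section CnGraph

variable {n : ℕ}

/-- The edges of `Γ_{C_n}` of index `i`, that is, the nine edges listed for `i` in the definition of
`cnGraph`. The last two lead to block `i + 1`. -/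
def cnEdges (i : ZMod n) : Multiset (Sym2 (Fin 6 × ZMod n)) :=
  {s((0, i), (1, i)), s((0, i), (4, i)), s((0, i), (5, i)), s((1, i), (5, i)),
    s((2, i), (3, i)), s((2, i), (5, i)), s((2, i), (4, i)),
    s((4, i), (1, i + 1)), s((3, i), (3, i + 1))}

theorem mem_edgeSet_cnGraph [Nontrivial (ZMod n)] (e : Sym2 (Fin 6 × ZMod n)) :
    e ∈ (cnGraph n).edgeSet ↔ ∃ i, e ∈ cnEdges i := by
  have not_isDiag : ∀ i, e ∈ cnEdges i → ¬ e.IsDiag := by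
    intro i he
    simp only [cnEdges, Multiset.insert_eq_cons, Multiset.mem_cons, Multiset.mem_singleton] at he
    rcases he with rfl | rfl | rfl | rfl | rfl | rfl | rfl | rfl | rfl <;> simp
  have mem_fromEdgeSet : e ∈ (cnGraph n).edgeSet ↔ (∃ i, e ∈ cnEdges i) ∧ ¬ e.IsDiag := by
    simp [cnGraph, SimpleGraph.edgeSet_fromEdgeSet, cnEdges]
  rw [mem_fromEdgeSet, and_iff_left_of_imp]
  exact fun ⟨i, hi⟩ => not_isDiag i hi

theorem nodup_cnEdges (i : ZMod n) : (cnEdges i).Nodup := by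
  simp [cnEdges]

theorem disjoint_cnEdges (h2 : (2 : ZMod n) ≠ 0) {i j : ZMod n} (hij : i ≠ j) :
    Disjoint (cnEdges i) (cnEdges j) := by
  have not_opposite : ¬ (i = j + 1 ∧ i + 1 = j) := by
    rintro ⟨hi, hj⟩
    exact h2 (by linear_combination hj - hi)
  rw [Multiset.disjoint_left]
  intro e hi hj
  simp only [cnEdges, Multiset.insert_eq_cons, Multiset.mem_cons, Multiset.mem_singleton] at hi
  rcases hi with rfl | rfl | rfl | rfl | rfl | rfl | rfl | rfl | rfl <;>
    simp [cnEdges, hij, not_opposite] at hj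

theorem nodup_sum_cnEdges [NeZero n] (h2 : (2 : ZMod n) ≠ 0) :
    (∑ i : ZMod n, cnEdges i).Nodup :=
  Multiset.nodup_bind.2 ⟨fun i _ => nodup_cnEdges i,
    Finset.univ.nodup.pairwise fun _ _ _ _ => disjoint_cnEdges h2⟩

theorem three_le_length_and_nodup_of_mem_cnCDC [NeZero n] (hn : 3 ≤ n) :
    ∀ l ∈ cnCDC n, 3 ≤ l.length ∧ l.Nodup := by
  have : Fact (1 < n) := ⟨by omega⟩
  intro l hl
  simp only [cnCDC, do_natCast_range, Multiset.mem_add, Multiset.mem_map, Multiset.insert_eq_cons,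
    Multiset.mem_cons, Multiset.mem_singleton] at hl
  rcases hl with ((⟨i, -, rfl⟩ | ⟨i, -, rfl⟩) | ⟨i, -, rfl⟩) | rfl | rfl
  · simp
  · simp
  · simp
  · exact ⟨by simpa [length_residues], (nodup_residues n).map (Prod.mk_right_injective 3)⟩
  · refine ⟨?_, List.nodup_flatMap.2 ⟨by simp, ?_⟩⟩
    · simp only [List.length_flatMap, List.length_cons, List.length_nil, List.map_const',
        length_residues, List.sum_replicate, smul_eq_mul]
      omega
    · exact (nodup_residues n).imp fun hij => by simp [hij.symm, Function.onFun]

theorem sum_cycleEdges_heptagon [NeZero n] :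
    ∑ i : ZMod n, (cycleEdges [((4 : Fin 6), i), (2, i), (3, i), (3, i + 1), (2, i + 1), (5, i + 1),
        (1, i + 1)] : Multiset (Sym2 (Fin 6 × ZMod n))) =
      ∑ i : ZMod n, ({s((2, i), (4, i)), s((2, i), (3, i)), s((3, i), (3, i + 1)),
        s((4, i), (1, i + 1))} + {s((2, i), (3, i)), s((2, i), (5, i)), s((1, i), (5, i))}) := by
  have shift := Equiv.sum_comp (Equiv.addRight (1 : ZMod n)) fun j =>
    ({s((2, j), (3, j)), s((2, j), (5, j)), s((1, j), (5, j))} : Multiset (Sym2 (Fin 6 × ZMod n)))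
  rw [Finset.sum_add_distrib, ← shift, ← Finset.sum_add_distrib]
  refine Finset.sum_congr rfl fun i _ => ?_
  simp only [cycleEdges, List.rotate_cons_succ, List.cons_append, List.nil_append,
    List.rotate_zero, List.zipWith_cons_cons, List.zipWith_nil_left, Sym2.eq_swap,
    ← Multiset.cons_coe, Multiset.coe_nil, ← Multiset.singleton_add, Multiset.add_zero,
    Multiset.insert_eq_cons, Equiv.coe_addRight]
  abel

theorem bind_cycleEdges_cnCDC (n : ℕ) [NeZero n] :
    (cnCDC n).bind (fun l => (cycleEdges l : Multiset _)) = 2 • ∑ i : ZMod n, cnEdges i := by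
  calc (cnCDC n).bind (fun l => (cycleEdges l : Multiset _))
      = ∑ i : ZMod n, ({s((0, i), (1, i)), s((1, i), (5, i)), s((0, i), (5, i))} +
          {s((0, i), (5, i)), s((2, i), (5, i)), s((2, i), (4, i)), s((0, i), (4, i))} +
          ({s((2, i), (4, i)), s((2, i), (3, i)), s((3, i), (3, i + 1)), s((4, i), (1, i + 1))} +
            {s((2, i), (3, i)), s((2, i), (5, i)), s((1, i), (5, i))}) +
          ({s((3, i), (3, i + 1))} +
            {s((0, i), (1, i)), s((0, i), (4, i)), s((4, i), (1, i + 1))})) := by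
        simp only [cnCDC, do_natCast_range, Multiset.add_bind, Multiset.bind_map,
          Multiset.insert_eq_cons, Multiset.cons_bind, Multiset.singleton_bind, univ_val_bind,
          List.map_eq_flatMap, coe_cycleEdges_flatMap_residues_cons, sum_cycleEdges_heptagon,
          ← Finset.sum_add_distrib]
        refine Finset.sum_congr rfl fun i _ => ?_
        simp only [cycleEdges, List.rotate_cons_succ, List.cons_append, List.nil_append,
          List.rotate_zero, List.zipWith_cons_cons, List.zipWith_nil_left, Sym2.eq_swap,
          ← Multiset.cons_coe, Multiset.coe_nil, Multiset.cons_zero]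
    _ = ∑ i : ZMod n, 2 • cnEdges i := by
        refine Finset.sum_congr rfl fun i _ => ?_
        simp only [cnEdges, Multiset.insert_eq_cons, ← Multiset.singleton_add]
        abel
    _ = 2 • ∑ i : ZMod n, cnEdges i := (Finset.smul_sum ..).symm

theorem card_cnCDC (n : ℕ) [NeZero n] : Multiset.card (cnCDC n) = 3 * n + 2 := by
  simp only [cnCDC, Multiset.insert_eq_cons, Multiset.card_add, Multiset.card_cons,
    Multiset.card_map, Multiset.card_singleton, Finset.card_val, Finset.card_univ, ZMod.card]
  ring

end CnGraph

/-- For `n ≥ 3`, the family `cnCDC n` of `3n+2` explicit cycles is a cycle double cover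
of `Γ_{C_n}`: every edge lies on exactly two of these cycles. -/
theorem cnCDC_isCycleDoubleCover (n : ℕ) [NeZero n] (hn : 3 ≤ n) :
    IsCycleDoubleCover (cnGraph n) (cnCDC n) ∧ Multiset.card (cnCDC n) = 3 * n + 2 := by
  have : Fact (1 < n) := ⟨by omega⟩
  have two_ne : (2 : ZMod n) ≠ 0 := fun h => by
    have := Nat.le_of_dvd two_pos ((ZMod.natCast_eq_zero_iff 2 n).1 h)
    omega
  have mem_sum_cnEdges (e : Sym2 (Fin 6 × ZMod n)) :
      e ∈ ∑ i, cnEdges i ↔ e ∈ (cnGraph n).edgeSet := by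
    simp [mem_edgeSet_cnGraph, Multiset.mem_sum]
  exact ⟨isCycleDoubleCover_of_bind_cycleEdges_eq_two_nsmul
    (three_le_length_and_nodup_of_mem_cnCDC hn) (nodup_sum_cnEdges two_ne) mem_sum_cnEdges
    (bind_cycleEdges_cnCDC n), card_cnCDC n⟩
end

section
/- For every integer n ≥ 4, the graph Γ_{D_n} is cubic (3-regular) and its automorphism group is isomorphic to the dihedral group of order 2n; it is generated by the rotation ω sending each vertex (x,i) to (x,i+1) together with the involution s that fixes the labels c and d coordinatewise as i ↦ −i (c_i ↦ c_{−i}, d_i ↦ d_{−i}) and swaps a_i with b_{−i}. -/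
/-- The graph `Γ_{D_n}` on vertex set `{a,b,c,d} × (ℤ/nℤ)` (the labels `a,b,c,d` are
encoded as `0,1,2,3 : Fin 4`), with edges, for every `i`:
`{a_i,b_i}, {a_i,c_i}, {b_i,c_i}, {c_i,d_i}, {a_i,b_{i+1}}, {d_i,d_{i+1}}`. -/
def dnGraph (n : ℕ) : SimpleGraph (Fin 4 × ZMod n) :=
  SimpleGraph.fromEdgeSet (⋃ i : ZMod n,
    {s((0, i), (1, i)), s((0, i), (2, i)), s((1, i), (2, i)),
     s((2, i), (3, i)), s((0, i), (1, i + 1)), s((3, i), (3, i + 1))})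

/-!
The graph consists of the triangles `a_i b_i c_i`, joined in a cycle by the edges `a_i b_{i+1}`, and
of the cycle of the `d_i`, joined to the triangles by the edges `c_i d_i`. When `n` does not divide
`3`, these are the only triangles, so every automorphism preserves the set of the `d_i` (which lie
on no triangle) and hence the set of the `c_i` (the remaining vertices with a neighbour `d_j`).
An automorphism fixing `a_i` therefore fixes its unique neighbour `c_i`, then `d_i`, `b_i` and
the third neighbour `b_{i+1}` of `a_i`; following the edges around the cycle, it fixes every vertex.
On the other hand `ω` and `s` generate an action of the dihedral group that is simply transitive on
the `a_i` and `b_i`, so this group is the whole automorphism group.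
-/

section General

variable {V W : Type*} {G : SimpleGraph V} {H : SimpleGraph W}

/-- `InTriangle G v` says that the vertex `v` lies on a triangle of `G`; this is the
automorphism invariant that tells the `d_i` apart in `dnGraph n`. -/
def InTriangle (G : SimpleGraph V) (v : V) : Prop :=
  ∃ u w, G.Adj v u ∧ G.Adj v w ∧ G.Adj u w

theorem InTriangle.map (f : G →g H) {v : V} : InTriangle G v → InTriangle H (f v) := by
  rintro ⟨u, w, hvu, hvw, huw⟩
  exact ⟨f u, f w, f.map_adj hvu, f.map_adj hvw, f.map_adj huw⟩

theorem inTriangle_apply_iff (f : G ≃g H) {v : V} : InTriangle H (f v) ↔ InTriangle G v :=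
  ⟨fun h => by simpa using h.map f.symm.toHom, fun h => h.map f.toHom⟩

theorem degree_eq_three_of_adj_iff {v x y z : V} [Fintype (G.neighborSet v)]
    (hxy : x ≠ y) (hxz : x ≠ z) (hyz : y ≠ z)
    (hadj : ∀ w, G.Adj v w ↔ w = x ∨ w = y ∨ w = z) : G.degree v = 3 := by
  classical
  rw [← G.card_neighborFinset_eq_degree, Finset.card_eq_three]
  exact ⟨x, y, z, hxy, hxz, hyz, by ext w; simp [hadj]⟩

theorem apply_eq_self_of_forall_adj_ne (f : G ≃g G) {v z : V} (hvz : G.Adj v z) (hv : f v = v)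
    (hne : ∀ w, G.Adj v w → w ≠ z → f w = w) : f z = z := by
  by_contra hz
  exact hz (f.injective (hne _ (by simpa [hv] using f.map_adj_iff.2 hvz) hz))

theorem dihedralGroup_closure_r_one_sr_zero (n : ℕ) :
    Subgroup.closure {DihedralGroup.r (1 : ZMod n), DihedralGroup.sr 0} = ⊤ := by
  rw [Subgroup.eq_top_iff']
  set K := Subgroup.closure {DihedralGroup.r (1 : ZMod n), DihedralGroup.sr 0}
  have r_mem (i : ZMod n) : DihedralGroup.r i ∈ K := by
    obtain ⟨k, rfl⟩ := ZMod.intCast_surjective i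
    rw [← DihedralGroup.r_one_zpow]
    exact K.zpow_mem (Subgroup.subset_closure (by simp)) k
  have sr_zero_mem : DihedralGroup.sr 0 ∈ K := Subgroup.subset_closure (by simp)
  rintro (i | i)
  · exact r_mem i
  · simpa using K.mul_mem sr_zero_mem (r_mem i)

end General

namespace dnGraph

variable {n : ℕ}

section Adjacency

variable {i : ZMod n} {v : Fin 4 × ZMod n}

theorem adj_iff {w : Fin 4 × ZMod n} : (dnGraph n).Adj v w ↔
    (∃ k, s(v, w) = s((0, k), (1, k)) ∨ s(v, w) = s((0, k), (2, k)) ∨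
      s(v, w) = s((1, k), (2, k)) ∨ s(v, w) = s((2, k), (3, k)) ∨
      s(v, w) = s((0, k), (1, k + 1)) ∨ s(v, w) = s((3, k), (3, k + 1))) ∧ v ≠ w := by
  simp only [dnGraph, SimpleGraph.fromEdgeSet_adj, Set.mem_iUnion, Set.mem_insert_iff,
    Set.mem_singleton_iff]

theorem adj_a_iff : (dnGraph n).Adj (0, i) v ↔ v = (1, i) ∨ v = (2, i) ∨ v = (1, i + 1) := by
  simp only [adj_iff, Sym2.eq_iff, Prod.mk.injEq]
  grind

theorem adj_b_iff : (dnGraph n).Adj (1, i) v ↔ v = (0, i) ∨ v = (2, i) ∨ v = (0, i - 1) := by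
  simp only [adj_iff, Sym2.eq_iff, Prod.mk.injEq]
  grind

theorem adj_c_iff : (dnGraph n).Adj (2, i) v ↔ v = (0, i) ∨ v = (1, i) ∨ v = (3, i) := by
  simp only [adj_iff, Sym2.eq_iff, Prod.mk.injEq]
  grind

theorem adj_d_iff : (dnGraph n).Adj (3, i) v ↔
    v = (2, i) ∨ v ≠ (3, i) ∧ (v = (3, i + 1) ∨ v = (3, i - 1)) := by
  simp only [adj_iff, Sym2.eq_iff, Prod.mk.injEq]
  grind

end Adjacency

theorem isRegularOfDegree_three [(dnGraph n).LocallyFinite] (h2 : (2 : ZMod n) ≠ 0) :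
    (dnGraph n).IsRegularOfDegree 3 := by
  have h1 : (1 : ZMod n) ≠ 0 := fun h => h2 (by linear_combination 2 * h)
  rintro ⟨x, i⟩
  fin_cases x
  · exact degree_eq_three_of_adj_iff (by simp) (by simpa using h1) (by simp) fun _ => adj_a_iff
  · have hne : i ≠ i - 1 := fun h => h1 (by linear_combination h)
    exact degree_eq_three_of_adj_iff (by simp) (by simpa using hne) (by simp) fun _ => adj_b_iff
  · exact degree_eq_three_of_adj_iff (by simp) (by simp) (by simp) fun _ => adj_c_iff
  · have hne : i + 1 ≠ i - 1 := fun h => h2 (by linear_combination h)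
    have hadj (w) : (dnGraph n).Adj (3, i) w ↔ w = (2, i) ∨ w = (3, i + 1) ∨ w = (3, i - 1) := by
      rw [adj_d_iff, and_iff_right_of_imp]
      rintro (rfl | rfl) <;> simpa using h1
    exact degree_eq_three_of_adj_iff (by simp) (by simp) (by simpa using hne) hadj

theorem fst_eq_c_iff (v : Fin 4 × ZMod n) :
    v.1 = 2 ↔ v.1 ≠ 3 ∧ ∃ w, (dnGraph n).Adj v w ∧ w.1 = 3 := by
  obtain ⟨x, i⟩ := v
  fin_cases x <;> simp [adj_a_iff, adj_b_iff, adj_c_iff]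

section Rigidity

variable (h3 : (3 : ZMod n) ≠ 0) (f : dnGraph n ≃g dnGraph n)

include h3

theorem not_inTriangle_d (i : ZMod n) : ¬ InTriangle (dnGraph n) (3, i) := by
  rintro ⟨u, w, hu, hw, huw⟩
  -- If `d_{i-1}` and `d_{i+1}` were adjacent, `i - 1` and `i + 1` would differ by `± 1`.
  have hne : i - 1 ≠ i + 1 + 1 := fun h => h3 (by linear_combination -h)
  have hne' : i + 1 ≠ i - 1 - 1 := fun h => h3 (by linear_combination h)
  rw [adj_d_iff] at hu hw
  rcases hu with rfl | ⟨hu, rfl | rfl⟩ <;> rcases hw with rfl | ⟨hw, rfl | rfl⟩ <;>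
    grind [adj_c_iff, adj_d_iff, sub_add_cancel, add_sub_cancel_right]

theorem inTriangle_iff (v : Fin 4 × ZMod n) : InTriangle (dnGraph n) v ↔ v.1 ≠ 3 := by
  obtain ⟨x, i⟩ := v
  fin_cases x
  · exact iff_of_true ⟨(1, i), (2, i), by simp [adj_a_iff, adj_b_iff]⟩ (by simp)
  · exact iff_of_true ⟨(0, i), (2, i), by simp [adj_a_iff, adj_b_iff]⟩ (by simp)
  · exact iff_of_true ⟨(0, i), (1, i), by simp [adj_a_iff, adj_c_iff]⟩ (by simp)
  · exact iff_of_false (not_inTriangle_d h3 i) (by simp)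

theorem fst_apply_eq_d_iff (v : Fin 4 × ZMod n) : (f v).1 = 3 ↔ v.1 = 3 := by
  simpa [inTriangle_iff h3, not_iff_not] using inTriangle_apply_iff f (v := v)

theorem fst_apply_eq_c_iff (v : Fin 4 × ZMod n) : (f v).1 = 2 ↔ v.1 = 2 := by
  rw [fst_eq_c_iff, fst_eq_c_iff, f.surjective.exists]
  simp only [ne_eq, fst_apply_eq_d_iff h3, f.map_adj_iff]

variable {f} {i : ZMod n}

theorem apply_c_eq_self_of_apply_a (ha : f (0, i) = (0, i)) : f (2, i) = (2, i) := by
  have hadj : (dnGraph n).Adj (0, i) (f (2, i)) := by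
    rw [← ha, f.map_adj_iff, adj_a_iff]; simp
  have hlabel := (fst_apply_eq_c_iff h3 f (2, i)).2 rfl
  grind [adj_a_iff]

theorem apply_c_eq_self_of_apply_b (hb : f (1, i) = (1, i)) : f (2, i) = (2, i) := by
  have hadj : (dnGraph n).Adj (1, i) (f (2, i)) := by
    rw [← hb, f.map_adj_iff, adj_b_iff]; simp
  have hlabel := (fst_apply_eq_c_iff h3 f (2, i)).2 rfl
  grind [adj_b_iff]

theorem apply_d_eq_self_of_apply_c (hc : f (2, i) = (2, i)) : f (3, i) = (3, i) := by
  have hadj : (dnGraph n).Adj (2, i) (f (3, i)) := by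
    rw [← hc, f.map_adj_iff, adj_c_iff]; simp
  have hlabel := (fst_apply_eq_d_iff h3 f (3, i)).2 rfl
  grind [adj_c_iff]

theorem apply_b_eq_self_of_apply_a (ha : f (0, i) = (0, i)) : f (1, i) = (1, i) := by
  have hc := apply_c_eq_self_of_apply_a h3 ha
  have hd := apply_d_eq_self_of_apply_c h3 hc
  exact apply_eq_self_of_forall_adj_ne f (by simp [adj_c_iff]) hc (by grind [adj_c_iff])

theorem apply_a_eq_self_of_apply_b (hb : f (1, i) = (1, i)) : f (0, i) = (0, i) := by
  have hc := apply_c_eq_self_of_apply_b h3 hb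
  have hd := apply_d_eq_self_of_apply_c h3 hc
  exact apply_eq_self_of_forall_adj_ne f (by simp [adj_c_iff]) hc (by grind [adj_c_iff])

theorem apply_a_add_one_eq_self (ha : f (0, i) = (0, i)) : f (0, i + 1) = (0, i + 1) := by
  have hb := apply_b_eq_self_of_apply_a h3 ha
  have hc := apply_c_eq_self_of_apply_a h3 ha
  have hb' : f (1, i + 1) = (1, i + 1) :=
    apply_eq_self_of_forall_adj_ne f (by simp [adj_a_iff]) ha (by grind [adj_a_iff])
  exact apply_a_eq_self_of_apply_b h3 hb'

theorem apply_a_sub_one_eq_self (ha : f (0, i) = (0, i)) : f (0, i - 1) = (0, i - 1) := by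
  have hb := apply_b_eq_self_of_apply_a h3 ha
  have hc := apply_c_eq_self_of_apply_a h3 ha
  exact apply_eq_self_of_forall_adj_ne f (by simp [adj_b_iff]) hb (by grind [adj_b_iff])

theorem apply_a_eq_self (h0 : f (0, 0) = (0, 0)) (i : ZMod n) : f (0, i) = (0, i) := by
  obtain ⟨k, rfl⟩ := ZMod.intCast_surjective i
  induction k with
  | zero => simpa using h0
  | succ k ih => simpa using apply_a_add_one_eq_self h3 ih
  | pred k ih => simpa using apply_a_sub_one_eq_self h3 ih

theorem eq_one_of_apply_a_zero_eq_self (h0 : f (0, 0) = (0, 0)) : f = 1 := by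
  ext1 ⟨x, i⟩
  have ha := apply_a_eq_self h3 h0 i
  have hc := apply_c_eq_self_of_apply_a h3 ha
  fin_cases x
  · exact ha
  · exact apply_b_eq_self_of_apply_a h3 ha
  · exact hc
  · exact apply_d_eq_self_of_apply_c h3 hc

end Rigidity

section DihedralAction

/-- The rotation `(x, i) ↦ (x, i + j)`, which is the `j`-th power of the `ω` of the theorem. -/
def rotation (j : ZMod n) : dnGraph n ≃g dnGraph n where
  toEquiv := (Equiv.refl (Fin 4)).prodCongr (Equiv.addRight j)
  map_rel_iff' := by
    rintro ⟨x, i⟩ ⟨y, k⟩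
    change (dnGraph n).Adj (x, i + j) (y, k + j) ↔ (dnGraph n).Adj (x, i) (y, k)
    match x with
    | 0 => grind [adj_a_iff]
    | 1 => grind [adj_b_iff]
    | 2 => grind [adj_c_iff]
    | 3 => grind [adj_d_iff]

variable (n) in
/-- The involution `s` of the theorem, which negates the index and swaps the labels `a` and `b`. -/
def reflection : dnGraph n ≃g dnGraph n where
  toEquiv := (Equiv.swap 0 1).prodCongr (Equiv.neg (ZMod n))
  map_rel_iff' := by
    rintro ⟨x, i⟩ ⟨y, k⟩
    change (dnGraph n).Adj (Equiv.swap 0 1 x, -i) (Equiv.swap 0 1 y, -k) ↔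
      (dnGraph n).Adj (x, i) (y, k)
    match x with
    | 0 => grind [adj_a_iff, adj_b_iff]
    | 1 => grind [adj_a_iff, adj_b_iff]
    | 2 => grind [adj_c_iff]
    | 3 => grind [adj_d_iff]

theorem rotation_apply (j : ZMod n) (v : Fin 4 × ZMod n) : rotation j v = (v.1, v.2 + j) := rfl

theorem reflection_apply (v : Fin 4 × ZMod n) :
    reflection n v = (Equiv.swap 0 1 v.1, -v.2) := rfl

theorem rotation_mul_rotation (i j : ZMod n) : rotation i * rotation j = rotation (i + j) := by
  ext1 v
  simp [rotation_apply, add_assoc, add_comm i]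

theorem reflection_mul_cancel_left (f : dnGraph n ≃g dnGraph n) :
    reflection n * (reflection n * f) = f := by
  ext1 v
  simp [reflection_apply]

theorem rotation_mul_reflection_mul_rotation (i j : ZMod n) :
    rotation i * (reflection n * rotation j) = reflection n * rotation (j - i) := by
  ext1 v
  simp [rotation_apply, reflection_apply, sub_eq_add_neg, add_comm, add_left_comm]

variable (n) in
/-- The action of the dihedral group on the graph, in which `DihedralGroup.r 1` acts as `ω` and
`DihedralGroup.sr 0` as `s`. -/
def dihedralHom : DihedralGroup n →* (dnGraph n ≃g dnGraph n) :=
  MonoidHom.mk'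
    (fun
      | .r i => rotation i
      | .sr i => reflection n * rotation i)
    (by
      rintro (i | i) (j | j)
      · simp [rotation_mul_rotation]
      · simp [rotation_mul_reflection_mul_rotation]
      · simp [mul_assoc, rotation_mul_rotation]
      · simp [mul_assoc, rotation_mul_reflection_mul_rotation, reflection_mul_cancel_left])

theorem dihedralHom_r_apply_a_zero (i : ZMod n) : dihedralHom n (.r i) (0, 0) = (0, i) := by
  simp [dihedralHom, rotation_apply]

theorem dihedralHom_sr_apply_a_zero (i : ZMod n) : dihedralHom n (.sr i) (0, 0) = (1, -i) := by
  simp [dihedralHom, rotation_apply, reflection_apply]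

theorem dihedralHom_injective : Function.Injective (dihedralHom n) := by
  intro g h hgh
  have h0 := DFunLike.congr_fun hgh (0, 0)
  rcases g with i | i <;> rcases h with j | j <;>
    grind [dihedralHom_r_apply_a_zero, dihedralHom_sr_apply_a_zero]

theorem exists_dihedralHom_apply_a_zero (h3 : (3 : ZMod n) ≠ 0) (f : dnGraph n ≃g dnGraph n) :
    ∃ g, dihedralHom n g (0, 0) = f (0, 0) := by
  have hc := fst_apply_eq_c_iff h3 f (0, 0)
  have hd := fst_apply_eq_d_iff h3 f (0, 0)
  rcases hf : f (0, 0) with ⟨x, i⟩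
  rw [hf] at hc hd
  fin_cases x
  · exact ⟨.r i, dihedralHom_r_apply_a_zero i⟩
  · exact ⟨.sr (-i), by simp [dihedralHom_sr_apply_a_zero]⟩
  · simp at hc
  · simp at hd

theorem dihedralHom_surjective (h3 : (3 : ZMod n) ≠ 0) : Function.Surjective (dihedralHom n) := by
  intro f
  obtain ⟨g, hg⟩ := exists_dihedralHom_apply_a_zero h3 f
  refine ⟨g, ?_⟩
  rw [← inv_mul_eq_one]
  apply eq_one_of_apply_a_zero_eq_self h3
  rw [RelIso.mul_apply, ← hg, RelIso.inv_apply_self]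

theorem closure_rotation_reflection (h3 : (3 : ZMod n) ≠ 0) :
    Subgroup.closure {rotation 1, reflection n} = ⊤ := by
  have hr : dihedralHom n (.r 1) = rotation 1 := rfl
  have hsr : dihedralHom n (.sr 0) = reflection n := by
    ext1 v
    simp [dihedralHom, rotation_apply]
  rw [← hr, ← hsr, ← Set.image_pair, ← MonoidHom.map_closure, dihedralGroup_closure_r_one_sr_zero,
    ← MonoidHom.range_eq_map, MonoidHom.range_eq_top]
  exact dihedralHom_surjective h3

end DihedralAction

end dnGraph

/-- For `n = 0`, where `ZMod 0 = ℤ`, this is the analogous statement about a two-way infinite graph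
and the infinite dihedral group. -/
theorem dnGraph_isRegular_and_aut_general (n : ℕ) [(dnGraph n).LocallyFinite]
    (hn2 : ¬ n ∣ 2) (hn3 : ¬ n ∣ 3) :
    (dnGraph n).IsRegularOfDegree 3 ∧
    ∃ ω σ : dnGraph n ≃g dnGraph n,
      (∀ v : Fin 4 × ZMod n, ω v = (v.1, v.2 + 1)) ∧
      (∀ i : ZMod n, σ (0, i) = (1, -i)) ∧
      (∀ i : ZMod n, σ (1, i) = (0, -i)) ∧
      (∀ i : ZMod n, σ (2, i) = (2, -i)) ∧
      (∀ i : ZMod n, σ (3, i) = (3, -i)) ∧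
      Subgroup.closure {ω, σ} = ⊤ ∧
      Nonempty ((dnGraph n ≃g dnGraph n) ≃* DihedralGroup n) := by
  have h2 : (2 : ZMod n) ≠ 0 := by exact_mod_cast (ZMod.natCast_eq_zero_iff 2 n).not.2 hn2
  have h3 : (3 : ZMod n) ≠ 0 := by exact_mod_cast (ZMod.natCast_eq_zero_iff 3 n).not.2 hn3
  exact ⟨dnGraph.isRegularOfDegree_three h2, dnGraph.rotation 1, dnGraph.reflection n,
    dnGraph.rotation_apply 1, fun _ => rfl, fun _ => rfl, fun _ => rfl, fun _ => rfl,
    dnGraph.closure_rotation_reflection h3,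
    ⟨(MulEquiv.ofBijective (dnGraph.dihedralHom n)
      ⟨dnGraph.dihedralHom_injective, dnGraph.dihedralHom_surjective h3⟩).symm⟩⟩

open scoped Classical in
/-- For `n ≥ 4`, the graph `Γ_{D_n}` is cubic and its automorphism group is isomorphic
to the dihedral group of order `2n`; it is generated by the rotation
`ω : (x,i) ↦ (x,i+1)` together with the involution `s` with `a_i ↦ b_{-i}`,
`b_i ↦ a_{-i}`, `c_i ↦ c_{-i}`, `d_i ↦ d_{-i}`. -/
theorem dnGraph_isRegular_and_aut (n : ℕ) [NeZero n] (hn : 4 ≤ n) :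
    (dnGraph n).IsRegularOfDegree 3 ∧
    ∃ ω σ : dnGraph n ≃g dnGraph n,
      (∀ v : Fin 4 × ZMod n, ω v = (v.1, v.2 + 1)) ∧
      (∀ i : ZMod n, σ (0, i) = (1, -i)) ∧
      (∀ i : ZMod n, σ (1, i) = (0, -i)) ∧
      (∀ i : ZMod n, σ (2, i) = (2, -i)) ∧
      (∀ i : ZMod n, σ (3, i) = (3, -i)) ∧
      Subgroup.closure {ω, σ} = ⊤ ∧
      Nonempty ((dnGraph n ≃g dnGraph n) ≃* DihedralGroup n) :=
  dnGraph_isRegular_and_aut_general n (Nat.not_dvd_of_pos_of_lt two_pos (by lia))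
    (Nat.not_dvd_of_pos_of_lt three_pos (by lia))
end

section
/- For every integer n ≥ 4, the graph Γ_{D_n} admits a cycle double cover consisting of 2n+2 cycles, namely: for each i ∈ ℤ/nℤ the triangle (a_i,b_i,c_i) and the 6-cycle (a_i,c_i,d_i,d_{i+1},c_{i+1},b_{i+1}); the n-cycle (d_1,d_2,…,d_n); and one 2n-cycle through all vertices a_j and b_j which alternately traverses the edges {a_j,b_j} and {a_j,b_{j+1}}. In particular every edge of Γ_{D_n} lies on exactly two of these cycles. -/
open scoped Classical in
/-- The explicit cycle double cover of `Γ_{D_n}`: for each `i` the triangle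
`(a_i,b_i,c_i)` and the `6`-cycle `(a_i,c_i,d_i,d_{i+1},c_{i+1},b_{i+1})`; the `n`-cycle
`(d_1,…,d_n)`; and one `2n`-cycle through all the `a_j` and `b_j` alternately traversing
the edges `{a_j,b_j}` and `{a_j,b_{j+1}}`. -/
noncomputable def dnCDC (n : ℕ) [NeZero n] : Multiset (List (Fin 4 × ZMod n)) :=
  (Finset.univ : Finset (ZMod n)).val.map
    (fun i => [((0 : Fin 4), i), (1, i), (2, i)]) +
  (Finset.univ : Finset (ZMod n)).val.map
    (fun i => [((0 : Fin 4), i), (2, i), (3, i), (3, i + 1), (2, i + 1), (1, i + 1)]) +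
  {(List.range n).map fun k => ((3 : Fin 4), (k : ZMod n)),
   (List.range n).flatMap fun k =>
     [((0 : Fin 4), -(k : ZMod n)), (1, -(k : ZMod n))]}

/-!
Write `T_i` and `H_i` for the triangle and the hexagon of index `i`, and `R` and `Z` for the
`n`-cycle and the `2n`-cycle. The two cycles through each edge are

* `a_i b_i`: `T_i`, `Z`;
* `a_i c_i`: `T_i`, `H_i`;
* `b_i c_i`: `T_i`, `H_{i-1}`;
* `c_i d_i`: `H_{i-1}`, `H_i`;
* `a_i b_{i+1}`: `H_i`, `Z`;
* `d_i d_{i+1}`: `H_i`, `R`.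

There are no other incidences as soon as `i - 1`, `i`, `i + 1` are distinct modulo `n`, that is, for
`n ≥ 3`.
-/

theorem countP_eq_sum_map_ite {α : Type*} (p : α → Prop) [DecidablePred p] (s : Multiset α) :
    s.countP p = (s.map fun a => if p a then 1 else 0).sum := by
  induction s using Multiset.induction_on with
  | empty => simp
  | cons a s ih => rw [Multiset.map_cons, Multiset.sum_cons, ← ih, Multiset.countP_cons, add_comm]

section CycleEdges

variable {V : Type*}

theorem cycleEdges_eq_zipWith {l l' : List V} {x : V} (h : l ++ [x] = x :: l') :
    cycleEdges l = List.zipWith (fun a b => s(a, b)) l l' := by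
  cases l with
  | nil => simp [cycleEdges]
  | cons y t =>
    obtain ⟨rfl, rfl⟩ : y = x ∧ t ++ [x] = l' := by simpa using h
    simp [cycleEdges]

theorem cycleEdges_map_range {f : ℕ → V} {m : ℕ} (h : f m = f 0) :
    cycleEdges ((List.range m).map f) = (List.range m).map fun k => s(f k, f (k + 1)) := by
  have hshift : (List.range m).map f ++ [f 0] =
      f 0 :: (List.range m).map fun k => f (k + 1) := by
    rw [← h, ← List.map_singleton, ← List.map_append, ← List.range_succ, List.range_succ_eq_map]
    simp [h]
  rw [cycleEdges_eq_zipWith hshift, List.zipWith_map, List.zipWith_self]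

theorem cycleEdges_flatMap_range_pair {f g : ℕ → V} {m : ℕ} (h : f m = f 0) :
    cycleEdges ((List.range m).flatMap fun k => [f k, g k]) =
      (List.range m).flatMap fun k => [s(f k, g k), s(g k, f (k + 1))] := by
  have hshift (j : ℕ) : ((List.range j).flatMap fun k => [f k, g k]) ++ [f j] =
      f 0 :: (List.range j).flatMap fun k => [g k, f (k + 1)] := by
    induction j with
    | zero => simp
    | succ j ih => simpa [List.range_succ] using congrArg (· ++ [g j, f (j + 1)]) ih
  have hzip (j : ℕ) :
      List.zipWith (fun a b => s(a, b)) ((List.range j).flatMap fun k => [f k, g k])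
          ((List.range j).flatMap fun k => [g k, f (k + 1)]) =
        (List.range j).flatMap fun k => [s(f k, g k), s(g k, f (k + 1))] := by
    induction j with
    | zero => simp
    | succ j ih =>
      simp only [List.range_succ, List.flatMap_append]
      rw [List.zipWith_append (by simp), ih]
      simp
  rw [cycleEdges_eq_zipWith (h ▸ hshift m), hzip]

theorem isCycleDoubleCover_iff_countP [DecidableEq V] {Γ : SimpleGraph V}
    {cs : Multiset (List V)} :
    IsCycleDoubleCover Γ cs ↔ (∀ l ∈ cs, IsCycleList Γ l) ∧
      ∀ e ∈ Γ.edgeSet, cs.countP (fun l => e ∈ cycleEdges l) = 2 := by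
  simp only [IsCycleDoubleCover, countP_eq_sum_map_ite]
  congr!

end CycleEdges

theorem exists_lt_natCast_zmod_iff {n : ℕ} [NeZero n] {P : ZMod n → Prop} :
    (∃ k : ℕ, k < n ∧ P k) ↔ ∃ i, P i :=
  ⟨fun ⟨k, _, hk⟩ => ⟨k, hk⟩, fun ⟨i, hi⟩ => ⟨i.val, i.val_lt, by rwa [ZMod.natCast_zmod_val]⟩⟩

theorem mk_pair_add_one_inj {α : Type*} {n : ℕ} [Fact (2 < n)] {x : α} {i j : ZMod n} :
    s((x, i), (x, i + 1)) = s((x, j), (x, j + 1)) ↔ i = j := by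
  refine ⟨fun h => ?_, by rintro rfl; rfl⟩
  obtain h | ⟨rfl, h⟩ : i = j ∨ i = j + 1 ∧ i + 1 = j := by simpa using h
  · exact h
  · exact absurd (by linear_combination -h) (ZMod.neg_one_ne_one (n := n))

/-- The triangle `(a_i, b_i, c_i)` of `Γ_{D_n}`. -/
def dnTriangle {n : ℕ} (i : ZMod n) : List (Fin 4 × ZMod n) :=
  [(0, i), (1, i), (2, i)]

/-- The `6`-cycle `(a_i, c_i, d_i, d_{i+1}, c_{i+1}, b_{i+1})` of `Γ_{D_n}`. -/
def dnHexagon {n : ℕ} (i : ZMod n) : List (Fin 4 × ZMod n) :=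
  [(0, i), (2, i), (3, i), (3, i + 1), (2, i + 1), (1, i + 1)]

/-- The `n`-cycle of `Γ_{D_n}` through the vertices `d_i`, listed from `d_0`. -/
def dnRim (n : ℕ) : List (Fin 4 × ZMod n) :=
  (List.range n).map fun k : ℕ => (3, (k : ZMod n))

/-- The `2n`-cycle `(a_0, b_0, a_{-1}, b_{-1}, …)` of `Γ_{D_n}`. The indices decrease because
`b_i` is adjacent to `a_{i-1}`. -/
def dnZigzag (n : ℕ) : List (Fin 4 × ZMod n) :=
  (List.range n).flatMap fun k : ℕ => [(0, -(k : ZMod n)), (1, -(k : ZMod n))]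

section DnCycles

variable {n : ℕ}

theorem dnCDC_eq [NeZero n] :
    dnCDC n = (Finset.univ : Finset (ZMod n)).val.map dnTriangle +
      (Finset.univ : Finset (ZMod n)).val.map dnHexagon + {dnRim n, dnZigzag n} := by
  -- In `dnCDC` the cast `ℕ → ZMod n` elaborates to a monadic lift of the whole list `List.range n`.
  have hcast : (List.range n >>= fun k => pure (k : ZMod n)) =
      (List.range n).map fun k : ℕ => (k : ZMod n) := by
    simp only [List.bind_eq_flatMap, List.pure_def, List.map_eq_flatMap]
  unfold dnCDC
  rw [hcast, List.map_map, List.flatMap_map]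
  rfl

theorem forall_mem_dnCDC [NeZero n] {p : List (Fin 4 × ZMod n) → Prop} :
    (∀ l ∈ dnCDC n, p l) ↔
      (∀ i : ZMod n, p (dnTriangle i)) ∧ (∀ i : ZMod n, p (dnHexagon i)) ∧
        p (dnRim n) ∧ p (dnZigzag n) := by
  simp only [dnCDC_eq, Multiset.mem_add, or_imp, forall_and, and_assoc]
  simp

theorem card_dnCDC [NeZero n] : Multiset.card (dnCDC n) = 2 * n + 2 := by
  simp [dnCDC_eq, two_mul]

theorem mem_edgeSet_dnGraph [Nontrivial (ZMod n)] {e : Sym2 (Fin 4 × ZMod n)} :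
    e ∈ (dnGraph n).edgeSet ↔ ∃ i : ZMod n,
      e = s((0, i), (1, i)) ∨ e = s((0, i), (2, i)) ∨ e = s((1, i), (2, i)) ∨
      e = s((2, i), (3, i)) ∨ e = s((0, i), (1, i + 1)) ∨ e = s((3, i), (3, i + 1)) := by
  simp only [dnGraph, SimpleGraph.edgeSet_fromEdgeSet, Set.mem_sdiff, Set.mem_iUnion,
    Set.mem_insert_iff, Set.mem_singleton_iff, and_iff_left_iff_imp]
  rintro ⟨i, rfl | rfl | rfl | rfl | rfl | rfl⟩ <;> simp

theorem mem_cycleEdges_dnTriangle {i : ZMod n} {e : Sym2 (Fin 4 × ZMod n)} :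
    e ∈ cycleEdges (dnTriangle i) ↔
      e = s((0, i), (1, i)) ∨ e = s((1, i), (2, i)) ∨ e = s((0, i), (2, i)) := by
  simp [dnTriangle, cycleEdges, Sym2.eq_swap (a := ((2 : Fin 4), i))]

theorem mem_cycleEdges_dnHexagon {i : ZMod n} {e : Sym2 (Fin 4 × ZMod n)} :
    e ∈ cycleEdges (dnHexagon i) ↔
      e = s((0, i), (2, i)) ∨ e = s((2, i), (3, i)) ∨ e = s((3, i), (3, i + 1)) ∨
      e = s((2, i + 1), (3, i + 1)) ∨ e = s((1, i + 1), (2, i + 1)) ∨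
      e = s((0, i), (1, i + 1)) := by
  simp [dnHexagon, cycleEdges, Sym2.eq_swap (a := ((3 : Fin 4), i + 1)) (b := (2, i + 1)),
    Sym2.eq_swap (a := ((2 : Fin 4), i + 1)) (b := (1, i + 1)),
    Sym2.eq_swap (a := ((1 : Fin 4), i + 1)) (b := (0, i))]

theorem mem_cycleEdges_dnRim [NeZero n] {e : Sym2 (Fin 4 × ZMod n)} :
    e ∈ cycleEdges (dnRim n) ↔ ∃ i : ZMod n, e = s((3, i), (3, i + 1)) := by
  rw [dnRim, cycleEdges_map_range (by simp), ← exists_lt_natCast_zmod_iff]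
  simp [eq_comm]

theorem mem_cycleEdges_dnZigzag [NeZero n] {e : Sym2 (Fin 4 × ZMod n)} :
    e ∈ cycleEdges (dnZigzag n) ↔
      ∃ i : ZMod n, e = s((0, i), (1, i)) ∨ e = s((0, i), (1, i + 1)) := by
  have hdescend : e ∈ cycleEdges (dnZigzag n) ↔
      ∃ j : ZMod n, e = s((0, -j), (1, -j)) ∨ e = s((0, -(j + 1)), (1, -j)) := by
    rw [dnZigzag, cycleEdges_flatMap_range_pair (by simp), ← exists_lt_natCast_zmod_iff]
    simp [Sym2.eq_swap (a := ((1 : Fin 4), _))]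
  rw [hdescend, exists_or, exists_or]
  exact or_congr ((Equiv.neg _).exists_congr fun j => by simp)
    (((Equiv.addRight 1).trans (Equiv.neg _)).exists_congr fun j => by simp)

theorem isCycleList_dnTriangle (i : ZMod n) : IsCycleList (dnGraph n) (dnTriangle i) := by
  refine ⟨by simp [dnTriangle], by simp [dnTriangle], fun e he => ?_⟩
  obtain rfl | rfl | rfl := mem_cycleEdges_dnTriangle.1 he <;> simp [dnGraph]

theorem isCycleList_dnHexagon [Nontrivial (ZMod n)] (i : ZMod n) :
    IsCycleList (dnGraph n) (dnHexagon i) := by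
  refine ⟨by simp [dnHexagon], by simp [dnHexagon], fun e he => ?_⟩
  rw [mem_edgeSet_dnGraph]
  obtain h | h | h | h | h | h := mem_cycleEdges_dnHexagon.1 he
  · exact ⟨i, by tauto⟩
  · exact ⟨i, by tauto⟩
  · exact ⟨i, by tauto⟩
  · exact ⟨i + 1, by tauto⟩
  · exact ⟨i + 1, by tauto⟩
  · exact ⟨i, by tauto⟩

theorem isCycleList_dnRim [NeZero n] (hn : 2 < n) : IsCycleList (dnGraph n) (dnRim n) := by
  have : Fact (1 < n) := ⟨by lia⟩
  refine ⟨by simpa [dnRim] using Nat.succ_le_of_lt hn, ?_, fun e he => ?_⟩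
  · refine List.nodup_range.map_on fun j hj k hk h => ?_
    exact CharP.natCast_injOn_Iio (ZMod n) n (List.mem_range.1 hj) (List.mem_range.1 hk)
      (congrArg Prod.snd h)
  · obtain ⟨i, h⟩ := mem_cycleEdges_dnRim.1 he
    exact mem_edgeSet_dnGraph.2 ⟨i, by tauto⟩

theorem isCycleList_dnZigzag [NeZero n] (hn : 1 < n) :
    IsCycleList (dnGraph n) (dnZigzag n) := by
  have : Fact (1 < n) := ⟨hn⟩
  have hlength : (dnZigzag n).length = 2 * n := by simp [dnZigzag, mul_comm]
  refine ⟨by lia, ?_, fun e he => ?_⟩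
  · refine List.nodup_flatMap.2 ⟨by simp, List.nodup_range.imp_of_mem fun hj hk hjk => ?_⟩
    have hcast := (CharP.natCast_injOn_Iio (ZMod n) n).ne (List.mem_range.1 hj)
      (List.mem_range.1 hk) hjk
    simp [hcast.symm]
  · obtain ⟨i, h⟩ := mem_cycleEdges_dnZigzag.1 he
    exact mem_edgeSet_dnGraph.2 ⟨i, by tauto⟩

theorem countP_dnCDC_eq_card_add [NeZero n] {e : Sym2 (Fin 4 × ZMod n)} {T H : Finset (ZMod n)}
    (hT : ∀ i, e ∈ cycleEdges (dnTriangle i) ↔ i ∈ T)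
    (hH : ∀ i, e ∈ cycleEdges (dnHexagon i) ↔ i ∈ H) :
    (dnCDC n).countP (fun l => e ∈ cycleEdges l) =
      T.card + H.card + ((if e ∈ cycleEdges (dnRim n) then 1 else 0) +
        if e ∈ cycleEdges (dnZigzag n) then 1 else 0) := by
  have hfamily {c : ZMod n → List (Fin 4 × ZMod n)} {S : Finset (ZMod n)}
      (hS : ∀ i, e ∈ cycleEdges (c i) ↔ i ∈ S) :
      (Finset.univ.val.map c).countP (fun l => e ∈ cycleEdges l) = S.card := by
    simp only [Multiset.countP_map, hS, ← Finset.filter_val, Finset.filter_univ_mem,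
      Finset.card_val]
  rw [dnCDC_eq, Multiset.countP_add, Multiset.countP_add, hfamily hT, hfamily hH]
  simp [← Multiset.cons_zero, Multiset.countP_cons, add_comm]

theorem countP_dnCDC_eq_two [NeZero n] (hn : 2 < n) {e : Sym2 (Fin 4 × ZMod n)}
    (he : e ∈ (dnGraph n).edgeSet) :
    (dnCDC n).countP (fun l => e ∈ cycleEdges l) = 2 := by
  have : Fact (1 < n) := ⟨by lia⟩
  have : Fact (2 < n) := ⟨hn⟩
  have hpred (i j : ZMod n) : j = i + 1 ↔ i = j - 1 := by rw [eq_sub_iff_add_eq, eq_comm]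
  obtain ⟨j, rfl | rfl | rfl | rfl | rfl | rfl⟩ := mem_edgeSet_dnGraph.1 he
  · rw [countP_dnCDC_eq_card_add (T := {j}) (H := ∅)
      (by simp [mem_cycleEdges_dnTriangle, eq_comm])
      (by simp [mem_cycleEdges_dnHexagon])]
    simp [mem_cycleEdges_dnRim, mem_cycleEdges_dnZigzag]
  · rw [countP_dnCDC_eq_card_add (T := {j}) (H := {j})
      (by simp [mem_cycleEdges_dnTriangle, eq_comm])
      (by simp [mem_cycleEdges_dnHexagon, eq_comm])]
    simp [mem_cycleEdges_dnRim, mem_cycleEdges_dnZigzag]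
  · rw [countP_dnCDC_eq_card_add (T := {j}) (H := {j - 1})
      (by simp [mem_cycleEdges_dnTriangle, eq_comm])
      (by simp [mem_cycleEdges_dnHexagon, hpred])]
    simp [mem_cycleEdges_dnRim, mem_cycleEdges_dnZigzag]
  · rw [countP_dnCDC_eq_card_add (T := ∅) (H := {j - 1, j})
      (by simp [mem_cycleEdges_dnTriangle])
      (by simp [mem_cycleEdges_dnHexagon, hpred, eq_comm, or_comm]), Finset.card_pair (by simp)]
    simp [mem_cycleEdges_dnRim, mem_cycleEdges_dnZigzag]
  · rw [countP_dnCDC_eq_card_add (T := ∅) (H := {j})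
      (by simp [mem_cycleEdges_dnTriangle])
      (by simp [mem_cycleEdges_dnHexagon, eq_comm])]
    simp [mem_cycleEdges_dnRim, mem_cycleEdges_dnZigzag]
  · rw [countP_dnCDC_eq_card_add (T := ∅) (H := {j})
      (by simp [mem_cycleEdges_dnTriangle])
      (by simp only [mem_cycleEdges_dnHexagon, mk_pair_add_one_inj]; simp [eq_comm])]
    simp [mem_cycleEdges_dnRim, mem_cycleEdges_dnZigzag]

end DnCycles

theorem dnCDC_isCycleDoubleCover_general (n : ℕ) [NeZero n] (hn : 3 ≤ n) :
    IsCycleDoubleCover (dnGraph n) (dnCDC n) ∧ Multiset.card (dnCDC n) = 2 * n + 2 := by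
  have : Fact (1 < n) := ⟨by lia⟩
  have hcycles : ∀ l ∈ dnCDC n, IsCycleList (dnGraph n) l :=
    forall_mem_dnCDC.2 ⟨isCycleList_dnTriangle, isCycleList_dnHexagon, isCycleList_dnRim hn,
      isCycleList_dnZigzag (by lia)⟩
  exact ⟨isCycleDoubleCover_iff_countP.2 ⟨hcycles, fun _ => countP_dnCDC_eq_two hn⟩, card_dnCDC⟩

/-- For `n ≥ 4`, the family `dnCDC n` of `2n+2` explicit cycles is a cycle double cover
of `Γ_{D_n}`: every edge lies on exactly two of these cycles. -/
theorem dnCDC_isCycleDoubleCover (n : ℕ) [NeZero n] (hn : 4 ≤ n) :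
    IsCycleDoubleCover (dnGraph n) (dnCDC n) ∧ Multiset.card (dnCDC n) = 2 * n + 2 :=
  dnCDC_isCycleDoubleCover_general n (by lia)
end
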